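/- arXiv:1508.00050 — 5 statements merged into one kernel-verified Lean document; each statement's English description precedes it below -/
import Mathlib

section
/- Let U be a finite group, H a subgroup of U, and X a set of representatives for the cosets U/H. Let Y and Z be subgroups of H and λ ∈ Irr(Z) such that: (a) Z ⊆ Z(U); (b) Y is normal in H; (c) Z ∩ Y = {1}; (d) ZY is normal in U; (e) for the unique extension λ̃ ∈ Irr(ZY) of λ with Y ⊆ Ker(λ̃) (note that ZY = Z × Y is an internal direct product by (a) and (c)) one has ˣλ̃ ≠ λ̃ for all x ∈ X ∖ H. Then the map χ ↦ χ^U is a bijection from Irr(H/Y, λ) onto Irr(U, λ) ∩ Irr(U, 1_Y). -/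
/-!
The lemma is an instance of the Clifford correspondence. The irreducible character `λ` of the
central subgroup `Z` is linear, and the extension `μ` of `λ` to `M = Z Y` which is trivial on `Y` is
a linear character of the normal subgroup `M` of `U`. It is stabilized by `H`, and by hypothesis by
nothing else.

A member of `Irr(H/Y, λ)` is an irreducible character of `H` on which `M` acts through `μ`
(`Datum.source_mul`). On such characters induction to `U` is isometric (`inner_ind`): in the Mackey
sum for `(χ^U, ψ^U)`, the summand of `w ∉ H` pairs functions that transform under `M` by the distinct
linear characters `μ` and `ʷμ`, hence vanishes. As irreducibility means having norm `1`, this shows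
that `χ^U` is irreducible and that `χ ↦ χ^U` is injective.

Conversely, let `R` be a unitary representation affording a member of `Irr(U, λ) ∩ Irr(U, 1_Y)`.
By Schur's lemma `Z` acts through `λ`, so `M` acts by `μ` on the nonzero space of `Y`-fixed vectors.
The projection `e` onto that space commutes with `H`, and its conjugates over `U/H` are orthogonal
idempotents whose sum commutes with `R`, so is the identity. Taking traces, the character of `R` is
induced from the character `h ↦ tr (R h e)` of `H` (`eq_ind`), which has norm `1` by the isometry.

All representation theory is done with matrices: characters are traces of unitary matrix
representations (`exists_unitary`), and a multiplicative family of matrices, not necessarily unital,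
has a character as its trace (`isCharacter_of_mul`).
-/

/-!
Reduction Lemma (Lemma `nred`, part 1) from "On the characters of the Sylow
p-subgroups of untwisted Chevalley groups".

We develop the needed character-theoretic notions concretely: a character of a
finite group `G` is the trace function of some finite-dimensional complex
representation; it is irreducible if moreover its self inner product is `1`.
Induction of characters, kernels, conjugate characters and the sets
`Irr(G, λ)` are defined by the standard formulas.
-/

noncomputable section

namespace CT

variable (G : Type) [Group G]

/-- The standard inner product of class functions of a finite group. -/
def innerProd (φ ψ : G → ℂ) : ℂ :=
  (Nat.card G : ℂ)⁻¹ * ∑ᶠ g : G, φ g * (starRingEnd ℂ) (ψ g)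

/-- `χ : G → ℂ` is a character: the trace function of some finite-dimensional
complex representation of `G`. -/
def IsCharacter (χ : G → ℂ) : Prop :=
  ∃ (m : ℕ) (ρ : Representation ℂ G (Fin m → ℂ)),
    ∀ g : G, χ g = LinearMap.trace ℂ (Fin m → ℂ) (ρ g)

/-- The set of irreducible (complex) characters of `G`. -/
def Irr : Set (G → ℂ) :=
  {χ | IsCharacter G χ ∧ innerProd G χ χ = 1}

variable {G}

open Classical in
/-- The induced character `λ^G` of a character `λ` of a subgroup `K ≤ G`. -/
def ind (K : Subgroup G) (lam : ↥K → ℂ) : G → ℂ := fun g =>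
  (Nat.card ↥K : ℂ)⁻¹ *
    ∑ᶠ x : G, if h : x⁻¹ * g * x ∈ K then lam ⟨x⁻¹ * g * x, h⟩ else 0

/-- `Irr(G, λ) = {χ ∈ Irr(G) | (χ, λ^G) > 0}`. -/
def IrrOver (K : Subgroup G) (lam : ↥K → ℂ) : Set (G → ℂ) :=
  {χ | χ ∈ Irr G ∧ 0 < (innerProd G χ (ind K lam)).re}

/-- The conjugate `ˣμ` of a character `μ` of a normal subgroup `M ⊴ G`,
defined by `ˣμ(m) = μ(x⁻¹ m x)`. -/
def conjChar {M : Subgroup G} (hM : M.Normal) (x : G) (μ : ↥M → ℂ) : ↥M → ℂ :=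
  fun m => μ ⟨x⁻¹ * (m : G) * x, by simpa using hM.conj_mem (m : G) m.2 x⁻¹⟩

end CT

namespace RedLemma

open CT

open Matrix
open scoped Kronecker

variable {G : Type} [Group G]

/-! ### Matrix representations and Schur's lemma -/

/-- A family of matrices that is multiplicative but need not send `1` to the identity still has a
character as its trace: `Q 1` is idempotent, and `G` acts on its range, which carries the whole
trace. This turns projections commuting with a representation, and induced representations, into
characters. -/
theorem isCharacter_of_mul {ι : Type} [Fintype ι] [DecidableEq ι] (Q : G → Matrix ι ι ℂ)
    (hQ : ∀ g k, Q (g * k) = Q g * Q k) : IsCharacter G (fun g => (Q g).trace) := by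
  have hQ' : ∀ g k, toLin' (Q (g * k)) = toLin' (Q g) ∘ₗ toLin' (Q k) := fun g k => by
    rw [hQ, toLin'_mul]
  set W : Submodule ℂ (ι → ℂ) := LinearMap.range (toLin' (Q 1)) with hW
  have hmem : ∀ g (x : ι → ℂ), toLin' (Q g) x ∈ W := fun g x => by
    refine ⟨toLin' (Q g) x, ?_⟩
    rw [← LinearMap.comp_apply, ← hQ', one_mul]
  let σ : G →* (W →ₗ[ℂ] W) :=
    { toFun := fun g => (toLin' (Q g)).restrict (fun x _ => hmem g x)
      map_one' := by
        ext ⟨x, y, rfl⟩ : 2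
        show toLin' (Q 1) (toLin' (Q 1) y) = toLin' (Q 1) y
        rw [← LinearMap.comp_apply, ← hQ', one_mul]
      map_mul' := fun g k => by
        ext x : 2
        show toLin' (Q (g * k)) x = toLin' (Q g) (toLin' (Q k) x)
        rw [hQ', LinearMap.comp_apply] }
  let e := (Module.finBasis ℂ W).equivFun
  refine ⟨Module.finrank ℂ W,
    { toFun := fun g => e.conj (σ g)
      map_one' := by rw [map_one]; exact e.conj_id
      map_mul' := fun g k => by rw [map_mul]; exact e.conj_comp _ _ }, fun g => ?_⟩
  show _ = LinearMap.trace ℂ _ (e.conj (σ g))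
  rw [LinearMap.trace_conj']
  show (Q g).trace = _
  rw [← Matrix.trace_toLin'_eq]
  exact (LinearMap.trace_restrict_eq_of_forall_mem W _ (hmem g)).symm

variable [Fintype G]

open scoped MatrixOrder ComplexOrder in
/-- Every character is the trace of a unitary matrix representation: conjugate a given
representation `A` by the positive square root `D` of the invariant form `∑ g, (A g)ᴴ * A g`. -/
theorem exists_unitary {χ : G → ℂ} (h : IsCharacter G χ) :
    ∃ (m : ℕ) (R : G →* Matrix (Fin m) (Fin m) ℂ),
      (∀ g, (R g)ᴴ = R g⁻¹) ∧ ∀ g, χ g = (R g).trace := by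
  classical
  obtain ⟨m, ρ, hρ⟩ := h
  let A : G →* Matrix (Fin m) (Fin m) ℂ :=
    { toFun := fun g => LinearMap.toMatrix' (ρ g)
      map_one' := by rw [map_one]; exact LinearMap.toMatrix'_id
      map_mul' := fun g k => by rw [map_mul]; exact LinearMap.toMatrix'_mul _ _ }
  have hA : ∀ g, χ g = (A g).trace := fun g => by
    rw [hρ, ← Matrix.trace_toLin'_eq]
    simp [A]
  let B : Matrix (Fin m) (Fin m) ℂ := ∑ g, (A g)ᴴ * A g
  have hB : B.PosDef := by
    have : B = 1 + ∑ g ∈ Finset.univ.erase 1, (A g)ᴴ * A g := by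
      show ∑ g, (A g)ᴴ * A g = _
      rw [← Finset.add_sum_erase _ _ (Finset.mem_univ (1 : G))]
      simp
    rw [this]
    exact PosDef.one.add_posSemidef
      (posSemidef_sum _ fun g _ => posSemidef_conjTranspose_mul_self _)
  have hBinv : ∀ g, (A g)ᴴ * B * A g = B := fun g => by
    simp only [B, Finset.mul_sum, Finset.sum_mul]
    rw [← Equiv.sum_comp (Equiv.mulRight g) (fun k => (A k)ᴴ * A k)]
    refine Finset.sum_congr rfl fun k _ => ?_
    simp [Matrix.mul_assoc]
  obtain ⟨D, hD, -, hDB⟩ :=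
      CFC.exists_sqrt_of_isSelfAdjoint_of_quasispectrumRestricts hB.isHermitian
          (QuasispectrumRestricts.nnreal_of_nonneg hB.posSemidef.nonneg)
  have hDu : IsUnit D := by
    have := hB.isUnit
    rw [← hDB] at this
    exact isUnit_of_mul_isUnit_left this
  have hDH : Dᴴ = D := hD
  obtain ⟨d, rfl⟩ := hDu
  refine ⟨m, { toFun := fun g => (d : Matrix (Fin m) (Fin m) ℂ) * A g * (↑d⁻¹ : Matrix (Fin m) (Fin m) ℂ)
               map_one' := by simp
               map_mul' := fun g k => by simp [mul_assoc] }, fun g => ?_, fun g => ?_⟩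
  · show ((d : Matrix (Fin m) (Fin m) ℂ) * A g * (↑d⁻¹ : Matrix (Fin m) (Fin m) ℂ))ᴴ
      = (d : Matrix (Fin m) (Fin m) ℂ) * A g⁻¹ * (↑d⁻¹ : Matrix (Fin m) (Fin m) ℂ)
    have hdi : (↑d⁻¹ : Matrix (Fin m) (Fin m) ℂ)ᴴ = ↑d⁻¹ := by
      have h1 : (↑d⁻¹ : Matrix (Fin m) (Fin m) ℂ)ᴴ * d = 1 := by
        conv_lhs => rw [← hDH]
        rw [← conjTranspose_mul]; simp
      exact (Units.eq_inv_of_mul_eq_one_right h1)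
    have h2 : (A g)ᴴ * B = B * A g⁻¹ := by
      rw [← hBinv g]
      conv_lhs => rw [hBinv g]
      rw [Matrix.mul_assoc, ← map_mul]; simp
    rw [conjTranspose_mul, conjTranspose_mul, hdi, hDH, Units.inv_mul_eq_iff_eq_mul]
    have h3 : (A g)ᴴ * (d : Matrix (Fin m) (Fin m) ℂ) * (d : Matrix (Fin m) (Fin m) ℂ)
        = (d : Matrix (Fin m) (Fin m) ℂ) * (d : Matrix (Fin m) (Fin m) ℂ) * A g⁻¹ := by
      rw [hDB, ← h2, ← hDB, Matrix.mul_assoc]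
    rw [← mul_assoc, Units.eq_mul_inv_iff_mul_eq, h3, mul_assoc]
  · rw [hA]
    show _ = ((d : Matrix (Fin m) (Fin m) ℂ) * A g * (↑d⁻¹ : Matrix (Fin m) (Fin m) ℂ)).trace
    rw [trace_mul_cycle]; simp

/-- A unitary matrix whose trace equals its size is the identity, since
`tr ((A - 1)ᴴ (A - 1)) = 2 m - 2 Re (tr A) = 0`. -/
theorem eq_one_of_trace {m : ℕ} {A : Matrix (Fin m) (Fin m) ℂ} (hA : Aᴴ * A = 1)
    (ht : A.trace = m) : A = 1 := by
  open scoped ComplexOrder in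
  rw [← sub_eq_zero, ← trace_conjTranspose_mul_self_eq_zero_iff]
  have : (A - 1)ᴴ * (A - 1) = Aᴴ * A - Aᴴ - A + 1 := by
    rw [conjTranspose_sub, conjTranspose_one]; noncomm_ring
  rw [this, hA]
  simp [trace_conjTranspose, ht]

omit [Group G] in
theorem innerProd_eq (φ ψ : G → ℂ) :
    innerProd G φ ψ = (Fintype.card G : ℂ)⁻¹ * ∑ g, φ g * (starRingEnd ℂ) (ψ g) := by
  rw [innerProd, finsum_eq_sum_of_fintype, Nat.card_eq_fintype_card]

theorem card_ne : (Fintype.card G : ℂ) ≠ 0 := by simp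

/-- Schur's lemma, with irreducibility expressed by the norm of the character. Averaging
`A ↦ R g * A * R g⁻¹` over `G` is a projection onto the commutant of `R`; its trace is the norm of
the character, so the commutant is one-dimensional. -/
theorem schur {m : ℕ} (R : G →* Matrix (Fin m) (Fin m) ℂ) (hR : ∀ g, (R g)ᴴ = R g⁻¹)
    (hn : innerProd G (fun g => (R g).trace) (fun g => (R g).trace) = 1)
    (A : Matrix (Fin m) (Fin m) ℂ) (hA : ∀ g, R g * A = A * R g) : ∃ c : ℂ, A = c • 1 := by
  -- `K g` is the matrix of `A ↦ R g * A * R g⁻¹` in the coordinates `vec A`.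
  let K : G → Matrix (Fin m × Fin m) (Fin m × Fin m) ℂ := fun g => (R g⁻¹)ᵀ ⊗ₖ R g
  have hK : ∀ g k, K (g * k) = K g * K k := fun g k => by
    simp only [K]
    rw [← mul_kronecker_mul, ← transpose_mul, ← map_mul, ← map_mul, _root_.mul_inv_rev]
  let Q := (Fintype.card G : ℂ)⁻¹ • ∑ g, K g
  have hKQ : ∀ g, K g * Q = Q := fun g => by
    simp only [Q, Matrix.mul_smul, Finset.mul_sum, ← hK]
    congr 1
    exact Equiv.sum_comp (Equiv.mulLeft g) K
  have hQ : Q * Q = Q := by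
    conv_lhs => enter [1]; simp only [Q]
    rw [smul_mul, Finset.sum_mul, Finset.sum_congr rfl fun g _ => hKQ g]
    rw [Finset.sum_const, Finset.card_univ, ← Nat.cast_smul_eq_nsmul ℂ, smul_smul,
      inv_mul_cancel₀ card_ne, one_smul]
  have hQt : Q.trace = 1 := by
    rw [← hn, innerProd_eq]
    simp only [Q, trace_smul, trace_sum, smul_eq_mul]
    congr 1
    refine Finset.sum_congr rfl fun g _ => ?_
    rw [trace_kronecker, trace_transpose, ← hR, trace_conjTranspose, mul_comm]; rfl
  have hfix : ∀ A : Matrix (Fin m) (Fin m) ℂ, (∀ g, R g * A = A * R g) →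
      vec A ∈ LinearMap.range (toLin' Q) := fun A hA => by
    refine ⟨vec A, ?_⟩
    rw [toLin'_apply]
    simp only [Q, smul_mulVec, sum_mulVec, K, kronecker_mulVec_vec, transpose_transpose]
    have : ∀ g, R g * A * R g⁻¹ = A := fun g => by
      rw [hA, Matrix.mul_assoc, ← map_mul]; simp
    simp only [this]
    rw [Finset.sum_const, Finset.card_univ, ← Nat.cast_smul_eq_nsmul ℂ, smul_smul,
      inv_mul_cancel₀ card_ne, one_smul]
  have hid : IsIdempotentElem (toLin' Q) := by
    show toLin' Q ∘ₗ toLin' Q = _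
    rw [← toLin'_mul, hQ]
  have hrank : Module.finrank ℂ (LinearMap.range (toLin' Q)) = 1 := by
    have := (LinearMap.IsIdempotentElem.isProj_range _ hid).trace
    rw [trace_toLin'_eq, hQt] at this
    exact_mod_cast this.symm
  have hm : (1 : Matrix (Fin m) (Fin m) ℂ) ≠ 0 := by
    intro h0
    rw [innerProd_eq] at hn
    have : ∀ g, R g = 0 := fun g => by rw [← Matrix.mul_one (R g), h0, Matrix.mul_zero]
    simp [this] at hn
  have hv : (⟨vec 1, hfix 1 (by simp)⟩ : LinearMap.range (toLin' Q)) ≠ 0 := by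
    intro h
    apply hm
    rw [← vec_inj]
    simpa using congrArg Subtype.val h
  obtain ⟨c, hc⟩ := (finrank_eq_one_iff_of_nonzero' _ hv).1 hrank ⟨vec A, hfix A hA⟩
  refine ⟨c, ?_⟩
  rw [← vec_inj, vec_smul]
  exact (congrArg Subtype.val hc).symm

theorem smul_one_inj {m : ℕ} (hm : m ≠ 0) {c d : ℂ}
    (h : c • (1 : Matrix (Fin m) (Fin m) ℂ) = d • 1) : c = d := by
  have := congrFun (congrFun h ⟨0, Nat.pos_of_ne_zero hm⟩) ⟨0, Nat.pos_of_ne_zero hm⟩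
  simpa using this

omit [Fintype G] in
theorem scalar_mul {m : ℕ} (hm : m ≠ 0) (R : G →* Matrix (Fin m) (Fin m) ℂ) {a b : G} {c d e : ℂ}
    (ha : R a = c • 1) (hb : R b = d • 1) (hab : R (a * b) = e • 1) : e = c * d := by
  apply smul_one_inj hm
  rw [← hab, map_mul, ha, hb]
  simp [smul_smul, mul_comm]

omit [Fintype G] in
theorem scalar_norm {m : ℕ} (hm : m ≠ 0) (R : G →* Matrix (Fin m) (Fin m) ℂ)
    (hR : ∀ g, (R g)ᴴ = R g⁻¹) {a : G} {c : ℂ} (ha : R a = c • 1) :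
    c * (starRingEnd ℂ) c = 1 := by
  apply smul_one_inj hm
  have : R a * (R a)ᴴ = 1 := by rw [hR, ← map_mul]; simp
  rw [one_smul]
  refine Eq.trans ?_ this
  rw [ha]
  simp [smul_smul, mul_comm]

theorem dim_ne_zero {m : ℕ} (R : G →* Matrix (Fin m) (Fin m) ℂ)
    (hn : innerProd G (fun g => (R g).trace) (fun g => (R g).trace) = 1) : m ≠ 0 := by
  rintro rfl
  rw [innerProd_eq] at hn
  simp [Matrix.trace] at hn

omit [Fintype G] in
/-- The elements on which the character takes the value of its degree act trivially. -/
theorem kernel {m : ℕ} (R : G →* Matrix (Fin m) (Fin m) ℂ)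
    (hR : ∀ g, (R g)ᴴ = R g⁻¹) {y : G} (h : (R y).trace = (R 1).trace) : R y = 1 := by
  apply eq_one_of_trace
  · rw [hR, ← map_mul]; simp
  · rw [h]; simp

theorem irr_unitary {χ : G → ℂ} (h : χ ∈ Irr G) :
    ∃ (m : ℕ) (R : G →* Matrix (Fin m) (Fin m) ℂ), (∀ g, (R g)ᴴ = R g⁻¹) ∧
      (∀ g, χ g = (R g).trace) ∧
      innerProd G (fun g => (R g).trace) (fun g => (R g).trace) = 1 ∧ m ≠ 0 := by
  obtain ⟨m, R, hR, hχ⟩ := exists_unitary h.1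
  have hn := h.2
  rw [funext hχ] at hn
  exact ⟨m, R, hR, hχ, hn, dim_ne_zero R hn⟩

/-- An irreducible character of an abelian group is multiplicative with values on the unit
circle. -/
theorem irr_of_comm {l : G → ℂ} (h : l ∈ Irr G) (hG : ∀ a b : G, a * b = b * a) :
    (∀ a b, l (a * b) = l a * l b) ∧ ∀ a, l a * (starRingEnd ℂ) (l a) = 1 := by
  obtain ⟨m, R, hR, hl, hn, hm⟩ := irr_unitary h
  choose c hc using fun g => schur R hR hn (R g) (fun k => by rw [← map_mul, hG, map_mul])
  have hl' : ∀ g, l g = c g * m := fun g => by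
    rw [hl, hc, trace_smul, trace_one, Fintype.card_fin, smul_eq_mul]
  have hcn : ∀ g, c g * (starRingEnd ℂ) (c g) = 1 := fun g => scalar_norm hm R hR (hc g)
  have hm1 : (m : ℂ) = 1 := by
    have h2 := h.2
    rw [innerProd_eq] at h2
    have : ∀ g, l g * (starRingEnd ℂ) (l g) = (m : ℂ) ^ 2 := fun g => by
      rw [hl', map_mul, Complex.conj_natCast]
      linear_combination (m : ℂ) ^ 2 * hcn g
    simp only [this, Finset.sum_const, Finset.card_univ, nsmul_eq_mul] at h2
    rw [inv_mul_cancel_left₀ card_ne] at h2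
    have : m ^ 2 = 1 := by exact_mod_cast h2
    have : m = 1 := by simpa using this
    exact_mod_cast this
  have hlc : ∀ g, l g = c g := fun g => by rw [hl', hm1, mul_one]
  refine ⟨fun a b => ?_, fun a => by rw [hlc]; exact hcn a⟩
  rw [hlc, hlc, hlc]
  exact scalar_mul hm R (hc a) (hc b) (hc _)

omit [Fintype G] in
theorem class_fn {χ : G → ℂ} (h : IsCharacter G χ) (x g : G) : χ (x⁻¹ * g * x) = χ g := by
  obtain ⟨m, ρ, hρ⟩ := h
  rw [hρ, hρ, map_mul ρ, LinearMap.trace_mul_comm, ← map_mul ρ]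
  simp

/-! ### Induction and Frobenius reciprocity -/

open Classical in
/-- The extension by zero to `G` of a function on the subgroup `K`. -/
def ext0 {A : Type} [Zero A] (K : Subgroup G) (f : K → A) : G → A :=
  fun g => if h : g ∈ K then f ⟨g, h⟩ else 0

omit [Fintype G] in
theorem ext0_mem {A : Type} [Zero A] {K : Subgroup G} {f : K → A} (k : K) :
    ext0 K f k = f k := by simp [ext0]

omit [Fintype G] in
theorem ext0_of_mem {A : Type} [Zero A] {K : Subgroup G} {f : K → A} {g : G} (h : g ∈ K) :
    ext0 K f g = f ⟨g, h⟩ := by simp [ext0, h]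

omit [Fintype G] in
theorem ext0_not_mem {A : Type} [Zero A] {K : Subgroup G} {f : K → A} {g : G} (h : g ∉ K) :
    ext0 K f g = 0 := by simp [ext0, h]

theorem sum_sub {A : Type} [AddCommMonoid A] (K : Subgroup G) [Fintype K] (F : G → A)
    (hF : ∀ g, g ∉ K → F g = 0) : ∑ g, F g = ∑ k : K, F k := by
  classical
  rw [← Finset.sum_filter_of_ne (p := fun g => g ∈ K)
    (fun g _ hg => by by_contra h; exact hg (hF g h))]
  exact Finset.sum_subtype _ (by simp) F

theorem ind_eq (K : Subgroup G) [Fintype K] (f : K → ℂ) (g : G) :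
    ind K f g = (Fintype.card K : ℂ)⁻¹ * ∑ x, ext0 K f (x⁻¹ * g * x) := by
  rw [ind, finsum_eq_sum_of_fintype, Nat.card_eq_fintype_card]
  rfl

/-- Frobenius reciprocity, with the inner product over `K` written out as a sum. -/
theorem frobenius (K : Subgroup G) [Fintype K] (f : K → ℂ) {χ : G → ℂ} (hχ : IsCharacter G χ) :
    innerProd G χ (ind K f) =
      (Fintype.card K : ℂ)⁻¹ * ∑ k : K, χ k * (starRingEnd ℂ) (f k) := by
  have hx : ∀ x, ∑ g, χ g * (starRingEnd ℂ) (ext0 K f (x⁻¹ * g * x)) =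
      ∑ k : K, χ k * (starRingEnd ℂ) (f k) := fun x => by
    rw [← Equiv.sum_comp (MulAut.conj x).toEquiv, sum_sub K]
    · refine Finset.sum_congr rfl fun k _ => ?_
      have := class_fn hχ x⁻¹ k
      simp only [MulEquiv.toEquiv_eq_coe, MulEquiv.coe_toEquiv, MulAut.conj_apply]
      rw [show x⁻¹ * (x * (k : G) * x⁻¹) * x = k by group, ext0_mem]
      rw [inv_inv] at this
      rw [this]
    · intro g hg
      simp only [MulEquiv.toEquiv_eq_coe, MulEquiv.coe_toEquiv, MulAut.conj_apply]
      rw [show x⁻¹ * (x * g * x⁻¹) * x = g by group, ext0_not_mem hg]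
      simp
  simp only [innerProd_eq, ind_eq, map_mul, map_sum, map_inv₀, Complex.conj_natCast]
  have : ∀ g, χ g * ((Fintype.card K : ℂ)⁻¹ * ∑ x, (starRingEnd ℂ) (ext0 K f (x⁻¹ * g * x))) =
      (Fintype.card K : ℂ)⁻¹ * ∑ x, χ g * (starRingEnd ℂ) (ext0 K f (x⁻¹ * g * x)) := fun g => by
    rw [Finset.mul_sum, Finset.mul_sum, Finset.mul_sum]
    exact Finset.sum_congr rfl fun _ _ => by ring
  simp only [this]
  rw [← Finset.mul_sum, Finset.sum_comm, Finset.sum_congr rfl fun x _ => hx x, Finset.sum_const,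
    Finset.card_univ, nsmul_eq_mul]
  have := card_ne (G := G)
  field_simp

/-- If an irreducible character lies over a linear character `l` of a central subgroup, then that
subgroup acts through the scalars `l`: by Schur's lemma it acts through some linear character, and
distinct linear characters are orthogonal. -/
theorem central_scalar (K : Subgroup G) (hK : K ≤ Subgroup.center G) (l : K → ℂ)
    (hl : ∀ a b, l (a * b) = l a * l b) (hln : ∀ a, l a * (starRingEnd ℂ) (l a) = 1)
    {m : ℕ} (R : G →* Matrix (Fin m) (Fin m) ℂ) (hR : ∀ g, (R g)ᴴ = R g⁻¹)
    {χ : G → ℂ} (hχ : ∀ g, χ g = (R g).trace) (hirr : χ ∈ Irr G)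
    (hn : innerProd G (fun g => (R g).trace) (fun g => (R g).trace) = 1)
    (hpos : 0 < (innerProd G χ (ind K l)).re) (k : K) : R k = l k • 1 := by
  classical
  have hm := dim_ne_zero R hn
  choose c hc using fun k : K => schur R hR hn (R k) (fun g => by
    rw [← map_mul, ← map_mul, Subgroup.mem_center_iff.1 (hK k.2)])
  have hcm : ∀ a b, c (a * b) = c a * c b := fun a b =>
    scalar_mul hm R (hc a) (hc b) (hc (a * b))
  set S := ∑ k, c k * (starRingEnd ℂ) (l k) with hS
  have hS0 : S ≠ 0 := by
    intro h0
    rw [frobenius K l hirr.1] at hpos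
    have : ∑ k : K, χ k * (starRingEnd ℂ) (l k) = m * S := by
      rw [hS, Finset.mul_sum]
      refine Finset.sum_congr rfl fun k _ => ?_
      rw [hχ, hc, trace_smul, trace_one, Fintype.card_fin, smul_eq_mul]; ring
    rw [this, h0] at hpos
    simp at hpos
  have h1 : S = c k * (starRingEnd ℂ) (l k) * S := by
    conv_lhs => rw [hS, ← Equiv.sum_comp (Equiv.mulLeft k)]
    rw [hS, Finset.mul_sum]
    refine Finset.sum_congr rfl fun a _ => ?_
    rw [Equiv.coe_mulLeft, hcm, hl, map_mul]; ring
  have h2 : c k * (starRingEnd ℂ) (l k) = 1 :=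
    mul_right_cancel₀ hS0 (by rw [← h1, one_mul])
  have h3 : c k = l k := by linear_combination l k * h2 - c k * hln k
  rw [hc, h3]

theorem central_inner (K : Subgroup G) (l : K → ℂ)
    (hln : ∀ a, l a * (starRingEnd ℂ) (l a) = 1)
    {χ : G → ℂ} (hχ : IsCharacter G χ) (h : ∀ k : K, χ k = χ 1 * l k) :
    innerProd G χ (ind K l) = χ 1 := by
  classical
  rw [frobenius K l hχ]
  have : ∀ k : K, χ k * (starRingEnd ℂ) (l k) = χ 1 := fun k => by
    rw [h]; linear_combination χ 1 * hln k
  simp only [this, Finset.sum_const, Finset.card_univ, nsmul_eq_mul]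
  rw [inv_mul_cancel_left₀ card_ne]

theorem sum_hom_nonneg (f : G → ℂ) (hf : ∀ a b, f (a * b) = f a * f b) :
    0 ≤ (∑ g, f g).re := by
  by_cases h : ∀ g, f g = 1
  · simp [h]
  · push Not at h
    obtain ⟨k, hk⟩ := h
    have : ∑ g, f g = f k * ∑ g, f g := by
      conv_lhs => rw [← Equiv.sum_comp (Equiv.mulLeft k)]
      rw [Finset.mul_sum]
      exact Finset.sum_congr rfl fun a _ => hf _ _
    have h0 : (f k - 1) * ∑ g, f g = 0 := by linear_combination -this
    rcases mul_eq_zero.1 h0 with h0 | h0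
    · exact absurd (sub_eq_zero.1 h0) hk
    · simp [h0]

open Classical in
/-- The block matrix of the induced representation has block `R (u⁻¹ g w)` at the cosets of `u`
and `w` (zero if `u⁻¹ g w ∉ H`). Indexing blocks by all of `G` instead of coset representatives
and dividing by `|H|` gives the same trace, and `isCharacter_of_mul` applies. -/
theorem ind_isCharacter (H : Subgroup G) {χ : H → ℂ} (h : IsCharacter H χ) :
    IsCharacter G (ind H χ) := by
  obtain ⟨m, R, -, hχ⟩ := exists_unitary h
  let E := ext0 H (fun h => R h)
  have hE : ∀ w, ∑ t, E t * E (t⁻¹ * w) = (Fintype.card H : ℂ) • E w := fun w => by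
    rw [sum_sub H]
    · have : ∀ k : H, E k * E ((k : G)⁻¹ * w) = E w := fun k => by
        by_cases hw : w ∈ H
        · simp only [E]
          rw [ext0_mem, ext0_of_mem hw, ext0_of_mem (H.mul_mem (H.inv_mem k.2) hw), ← map_mul]
          congr 1
          ext
          simp
        · simp only [E]
          rw [ext0_not_mem hw, ext0_not_mem (g := (k : G)⁻¹ * w), mul_zero]
          intro h'
          apply hw
          simpa using H.mul_mem k.2 h'
      simp only [this]
      rw [Finset.sum_const, Finset.card_univ, Nat.cast_smul_eq_nsmul]
    · intro t ht
      simp only [E]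
      rw [ext0_not_mem ht, zero_mul]
  let Q : G → Matrix (G × Fin m) (G × Fin m) ℂ := fun g => Matrix.of fun a b =>
    (Fintype.card H : ℂ)⁻¹ * E (a.1⁻¹ * g * b.1) a.2 b.2
  have hQ : ∀ g k, Q (g * k) = Q g * Q k := fun g k => by
    ext ⟨u, i⟩ ⟨w, j⟩
    simp only [Q, Matrix.mul_apply, Matrix.of_apply, Fintype.sum_prod_type]
    rw [← Equiv.sum_comp (Equiv.mulLeft (g⁻¹ * u))]
    have h1 := congrFun (congrFun (hE (u⁻¹ * (g * k) * w)) i) j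
    simp only [Matrix.sum_apply, Matrix.mul_apply, Matrix.smul_apply, smul_eq_mul] at h1
    have h2 : ∀ t, ∑ x, ((Fintype.card H : ℂ)⁻¹ * E (u⁻¹ * g * (g⁻¹ * u * t)) i x) *
        ((Fintype.card H : ℂ)⁻¹ * E ((g⁻¹ * u * t)⁻¹ * k * w) x j) =
        (Fintype.card H : ℂ)⁻¹ * (Fintype.card H : ℂ)⁻¹ *
          ∑ x, E t i x * E (t⁻¹ * (u⁻¹ * (g * k) * w)) x j := fun t => by
      rw [Finset.mul_sum]
      refine Finset.sum_congr rfl fun x _ => ?_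
      rw [show u⁻¹ * g * (g⁻¹ * u * t) = t by group,
        show (g⁻¹ * u * t)⁻¹ * k * w = t⁻¹ * (u⁻¹ * (g * k) * w) by group]
      ring
    simp only [Equiv.coe_mulLeft, h2]
    rw [← Finset.mul_sum, h1]
    have := card_ne (G := H)
    field_simp
  convert isCharacter_of_mul Q hQ using 1
  funext g
  rw [ind_eq, Matrix.trace, Fintype.sum_prod_type, Finset.mul_sum]
  refine Finset.sum_congr rfl fun u _ => ?_
  simp only [Matrix.diag_apply, Q, Matrix.of_apply]
  rw [← Finset.mul_sum]
  congr 1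
  by_cases hu : u⁻¹ * g * u ∈ H
  · simp only [E]
    rw [ext0_of_mem hu, ext0_of_mem hu, hχ]; rfl
  · simp only [E]
    rw [ext0_not_mem hu, ext0_not_mem hu]; simp

/-! ### The Clifford correspondence over a linear character -/

/-- Induction from `H` preserves inner products of characters on which the normal subgroup `M`
acts through a linear character `μ` whose stabilizer lies in `H`. Here `μ` is a function on `G`
of which only the values on `M` matter. -/
theorem inner_ind (H M : Subgroup G) [Fintype H] (hMH : M ≤ H) (hM : M.Normal) (μ : G → ℂ)
    (hμ : ∀ m ∈ M, μ m * (starRingEnd ℂ) (μ m) = 1)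
    (hsep : ∀ u, u ∉ H → ∃ m ∈ M, μ (u⁻¹ * m * u) ≠ μ m)
    (χ ψ : H → ℂ) (hχ : ∀ m (hm : m ∈ M) (h : H), χ (⟨m, hMH hm⟩ * h) = μ m * χ h)
    (hψ : ∀ m (hm : m ∈ M) (h : H), ψ (⟨m, hMH hm⟩ * h) = μ m * ψ h)
    (hψc : ∀ x h : H, ψ (x⁻¹ * h * x) = ψ h) :
    innerProd G (ind H χ) (ind H ψ) = innerProd H χ ψ := by
  have hext : ∀ f : H → ℂ, (∀ m (hm : m ∈ M) (h : H), f (⟨m, hMH hm⟩ * h) = μ m * f h) →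
      ∀ m ∈ M, ∀ g, ext0 H f (m * g) = μ m * ext0 H f g := by
    intro f hf m hm g
    by_cases hg : g ∈ H
    · rw [ext0_of_mem hg, ext0_of_mem (H.mul_mem (hMH hm) hg)]
      exact hf m hm ⟨g, hg⟩
    · rw [ext0_not_mem hg, ext0_not_mem, mul_zero]
      rwa [H.mul_mem_cancel_left (hMH hm)]
  have hχ' := hext χ hχ
  have hψ' := hext ψ hψ
  set N := ∑ h : H, χ h * (starRingEnd ℂ) (ψ h) with hN
  -- `S w` is the (unnormalized) inner product of `χ` with the conjugate of `ψ` by `w`; these are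
  -- the Mackey summands. For `w ∉ H` it vanishes: the linear characters of `M` involved differ.
  let S : G → ℂ := fun w => ∑ g, ext0 H χ g * (starRingEnd ℂ) (ext0 H ψ (w⁻¹ * g * w))
  have hS0 : ∀ w, w ∉ H → S w = 0 := fun w hw => by
    obtain ⟨m, hm, hne⟩ := hsep w hw
    have hm' : w⁻¹ * m * w ∈ M := by simpa using hM.conj_mem m hm w⁻¹
    have h1 : S w = μ m * (starRingEnd ℂ) (μ (w⁻¹ * m * w)) * S w := by
      conv_lhs => simp only [S]; rw [← Equiv.sum_comp (Equiv.mulLeft m)]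
      simp only [S]
      rw [Finset.mul_sum]
      refine Finset.sum_congr rfl fun g _ => ?_
      rw [Equiv.coe_mulLeft, hχ' m hm,
        show w⁻¹ * (m * g) * w = (w⁻¹ * m * w) * (w⁻¹ * g * w) by group, hψ' _ hm', map_mul]
      ring
    by_contra h0
    have h2 : μ m * (starRingEnd ℂ) (μ (w⁻¹ * m * w)) = 1 :=
      mul_right_cancel₀ h0 (by rw [← h1, one_mul])
    apply hne
    linear_combination μ m * hμ _ hm' - μ (w⁻¹ * m * w) * h2
  have hS1 : ∀ w : H, S w = N := fun w => by
    simp only [S, hN]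
    rw [sum_sub H]
    · refine Finset.sum_congr rfl fun h _ => ?_
      have : ((w : G)⁻¹ * h * w) = ((w⁻¹ * h * w : H) : G) := by simp
      rw [this, ext0_mem, ext0_mem, hψc]
    · intro g hg
      rw [ext0_not_mem hg, zero_mul]
  have hx : ∀ x w, ∑ g, ext0 H χ (x⁻¹ * g * x) * (starRingEnd ℂ) (ext0 H ψ (w⁻¹ * g * w)) =
      S (x⁻¹ * w) := fun x w => by
    rw [← Equiv.sum_comp (MulAut.conj x).toEquiv]
    simp only [S]
    refine Finset.sum_congr rfl fun g _ => ?_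
    simp only [MulEquiv.toEquiv_eq_coe, MulEquiv.coe_toEquiv, MulAut.conj_apply]
    rw [show x⁻¹ * (x * g * x⁻¹) * x = g by group,
      show w⁻¹ * (x * g * x⁻¹) * w = (x⁻¹ * w)⁻¹ * g * (x⁻¹ * w) by group]
  have hsum : ∑ x, ∑ w, S (x⁻¹ * w) = Fintype.card G * (Fintype.card H * N) := by
    have : ∀ x, ∑ w, S (x⁻¹ * w) = Fintype.card H * N := fun x => by
      refine (Equiv.sum_comp (Equiv.mulLeft x⁻¹) S).trans ?_
      rw [sum_sub H S hS0]
      simp only [hS1]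
      rw [Finset.sum_const, Finset.card_univ, nsmul_eq_mul]
    simp only [this]
    rw [Finset.sum_const, Finset.card_univ, nsmul_eq_mul]
  have key : ∀ g, ind H χ g * (starRingEnd ℂ) (ind H ψ g) =
      (Fintype.card H : ℂ)⁻¹ * (Fintype.card H : ℂ)⁻¹ *
        ∑ x, ∑ w, ext0 H χ (x⁻¹ * g * x) * (starRingEnd ℂ) (ext0 H ψ (w⁻¹ * g * w)) := fun g => by
    rw [ind_eq, ind_eq, map_mul, map_sum, map_inv₀, Complex.conj_natCast, ← Finset.sum_mul_sum]
    ring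
  rw [innerProd_eq, innerProd_eq]
  simp only [key]
  rw [← Finset.mul_sum, Finset.sum_comm]
  rw [Finset.sum_congr rfl fun x _ => Finset.sum_comm]
  simp only [hx]
  rw [hsum]
  have := card_ne (G := G)
  have := card_ne (G := H)
  rw [← hN]
  field_simp

/-- Let `e` be a nonzero idempotent commuting with `H`, on whose range `M` acts by `μ`. Its
`G`-conjugates are orthogonal for distinct cosets of `H`, their sum `E` is a nonzero idempotent
commuting with the irreducible representation `R`, hence `E = 1`. Taking the trace of `R g * E`
exhibits the character of `R` as induced from the character of `H` on the range of `e`. -/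
theorem eq_ind (H M : Subgroup G) (hMH : M ≤ H) (hM : M.Normal) (μ : G → ℂ)
    (hsep : ∀ u, u ∉ H → ∃ m ∈ M, μ (u⁻¹ * m * u) ≠ μ m)
    {m : ℕ} (R : G →* Matrix (Fin m) (Fin m) ℂ) (hR : ∀ g, (R g)ᴴ = R g⁻¹)
    (hn : innerProd G (fun g => (R g).trace) (fun g => (R g).trace) = 1)
    (e : Matrix (Fin m) (Fin m) ℂ) (hee : e * e = e) (he0 : e ≠ 0)
    (hcomm : ∀ h ∈ H, R h * e = e * R h) (hμ : ∀ a ∈ M, R a * e = μ a • e) (g : G) :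
    (R g).trace = ind H (fun h => (R h * e).trace) g := by
  classical
  have hzero : ∀ u, u ∉ H → e * R u * e = 0 := fun u hu => by
    obtain ⟨a, ha, hne⟩ := hsep u hu
    have ha' : u⁻¹ * a * u ∈ M := by simpa using hM.conj_mem a ha u⁻¹
    have h1 : e * R a * R u * e = μ a • (e * R u * e) := by
      rw [← hcomm a (hMH ha), hμ a ha]
      simp
    have h2 : e * R a * R u * e = μ (u⁻¹ * a * u) • (e * R u * e) := by
      have : R a * R u = R u * R (u⁻¹ * a * u) := by
        rw [← map_mul, ← map_mul]; congr 1; group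
      rw [mul_assoc e, this, mul_assoc, mul_assoc (R u), hμ _ ha']
      simp [mul_assoc]
    have h3 : (μ (u⁻¹ * a * u) - μ a) • (e * R u * e) = 0 := by
      rw [sub_smul, ← h1, ← h2, sub_self]
    exact (smul_eq_zero.1 h3).resolve_left (sub_ne_zero.2 hne)
  let E := (Fintype.card H : ℂ)⁻¹ • ∑ x, R x * e * R x⁻¹
  have hE : ∀ k, R k * E = E * R k := fun k => by
    simp only [E]
    rw [mul_smul_comm, smul_mul_assoc, Finset.mul_sum, Finset.sum_mul]
    congr 1
    rw [← Equiv.sum_comp (Equiv.mulLeft k) (fun x => R x * e * R x⁻¹ * R k)]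
    refine Finset.sum_congr rfl fun x _ => ?_
    have : R x⁻¹ = R (k * x)⁻¹ * R k := by
      rw [← map_mul]; congr 1; group
    rw [Equiv.coe_mulLeft, this, map_mul]
    simp only [mul_assoc]
  obtain ⟨c, hc⟩ := schur R hR hn E hE
  have hEe : E * e = e := by
    simp only [E]
    rw [smul_mul_assoc, Finset.sum_mul, sum_sub H]
    · have : ∀ k : H, R k * e * R (k : G)⁻¹ * e = e := fun k => by
        rw [hcomm k k.2, mul_assoc e, ← map_mul]
        simp [hee]
      simp only [this]
      rw [Finset.sum_const, Finset.card_univ, ← Nat.cast_smul_eq_nsmul ℂ, smul_smul,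
        inv_mul_cancel₀ card_ne, one_smul]
    · intro x hx
      rw [mul_assoc (R x), mul_assoc (R x), hzero, mul_zero]
      rwa [H.inv_mem_iff]
  have hE1 : E = 1 := by
    rw [hc, smul_mul_assoc, one_mul] at hEe
    have : (c - 1) • e = 0 := by rw [sub_smul, hEe, one_smul, sub_self]
    have := (smul_eq_zero.1 this).resolve_right he0
    rw [hc, sub_eq_zero.1 this, one_smul]
  rw [ind_eq]
  have hterm : ∀ x, ext0 H (fun h : H => (R h * e).trace) (x⁻¹ * g * x) =
      (R g * (R x * e * R x⁻¹)).trace := fun x => by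
    have h1 : (R g * (R x * e * R x⁻¹)).trace = (R (x⁻¹ * g * x) * e).trace := by
      rw [map_mul, map_mul, ← mul_assoc, trace_mul_comm]
      simp only [mul_assoc]
    rw [h1]
    by_cases hx : x⁻¹ * g * x ∈ H
    · rw [ext0_of_mem hx]
    · rw [ext0_not_mem hx, ← hee, ← mul_assoc, trace_mul_comm, ← mul_assoc, hzero _ hx, trace_zero]
  simp only [hterm]
  rw [← trace_sum, ← Finset.mul_sum, ← smul_eq_mul, ← trace_smul, ← mul_smul_comm]
  show _ = (R g * E).trace
  rw [hE1, mul_one]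

/-- The degree of an irreducible character is a positive integer. -/
theorem pos_one {χ : G → ℂ} (h : χ ∈ Irr G) : ∃ m : ℕ, 0 < m ∧ χ 1 = m := by
  obtain ⟨m, R, -, hχ, -, hm⟩ := irr_unitary h
  exact ⟨m, Nat.pos_of_ne_zero hm, by rw [hχ]; simp⟩

theorem re_pos_one {χ : G → ℂ} (h : χ ∈ Irr G) : 0 < (χ 1).re := by
  obtain ⟨m, hm, h1⟩ := pos_one h
  rw [h1]
  simpa using hm

theorem eq_of_inner {φ ψ : G → ℂ} (h1 : innerProd G φ φ = 1) (h2 : innerProd G ψ ψ = 1)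
    (h3 : innerProd G φ ψ = 1) (h4 : innerProd G ψ φ = 1) : φ = ψ := by
  have h0 : innerProd G (fun g => φ g - ψ g) (fun g => φ g - ψ g) = 0 := by
    have : innerProd G (fun g => φ g - ψ g) (fun g => φ g - ψ g) =
        innerProd G φ φ - innerProd G φ ψ - innerProd G ψ φ + innerProd G ψ ψ := by
      simp only [innerProd_eq, ← mul_sub, ← mul_add, ← Finset.sum_sub_distrib,
        ← Finset.sum_add_distrib]
      congr 1
      refine Finset.sum_congr rfl fun g _ => ?_
      rw [map_sub]; ring
    rw [this, h1, h2, h3, h4]; ring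
  rw [innerProd_eq] at h0
  have h5 := (mul_eq_zero.1 h0).resolve_left (inv_ne_zero card_ne)
  simp only [Complex.mul_conj] at h5
  have h6 : ∑ g, Complex.normSq (φ g - ψ g) = 0 := by exact_mod_cast h5
  funext g
  have := (Finset.sum_eq_zero_iff_of_nonneg fun g _ => Complex.normSq_nonneg _).1 h6 g
    (Finset.mem_univ g)
  exact sub_eq_zero.1 (Complex.normSq_eq_zero.1 this)

/-! ### The correspondence between `Irr(H/Y, λ)` and `Irr(G, λ) ∩ Irr(G, 1_Y)` -/

/-- The hypotheses of the reduction lemma, with the extension `λ̃` replaced by a function `μ` on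
all of `G` satisfying `μ (z y) = λ z` for `z ∈ Z`, `y ∈ Y` (values off `Z ⊔ Y` are irrelevant), and
with the condition on representatives replaced by its consequence `sep`: no element outside `H`
stabilizes `μ`. -/
structure Datum (H Y Z : Subgroup G) (lam : Z → ℂ) (μ : G → ℂ) : Prop where
  hYH : Y ≤ H
  hZH : Z ≤ H
  central : Z ≤ Subgroup.center G
  conjY : ∀ h ∈ H, ∀ y ∈ Y, h * y * h⁻¹ ∈ Y
  normal : (Z ⊔ Y).Normal
  mul_lam : ∀ a b, lam (a * b) = lam a * lam b
  norm_lam : ∀ a, lam a * (starRingEnd ℂ) (lam a) = 1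
  eval : ∀ z : Z, ∀ y ∈ Y, μ (z * y) = lam z
  sep : ∀ u, u ∉ H → ∃ m ∈ Z ⊔ Y, μ (u⁻¹ * m * u) ≠ μ m

namespace Datum

variable {H Y Z : Subgroup G} {lam : Z → ℂ} {μ : G → ℂ}

omit [Fintype G] in
theorem le (D : Datum H Y Z lam μ) : Z ⊔ Y ≤ H := sup_le D.hZH D.hYH

omit [Fintype G] in
theorem comm (D : Datum H Y Z lam μ) (z : Z) (u : G) : u * z = z * u :=
  Subgroup.mem_center_iff.1 (D.central z.2) u

omit [Fintype G] in
theorem exists_mul (D : Datum H Y Z lam μ) {a : G} (ha : a ∈ Z ⊔ Y) :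
    ∃ z : Z, ∃ y ∈ Y, a = z * y := by
  have : Z.Normal := ⟨fun z hz g => by
    rw [D.comm ⟨z, hz⟩ g]; simpa using hz⟩
  obtain ⟨z, hz, y, hy, rfl⟩ := Subgroup.mem_sup_of_normal_left.1 ha
  exact ⟨⟨z, hz⟩, y, hy, rfl⟩

omit [Fintype G] in
theorem norm (D : Datum H Y Z lam μ) (a : G) (ha : a ∈ Z ⊔ Y) :
    μ a * (starRingEnd ℂ) (μ a) = 1 := by
  obtain ⟨z, y, hy, rfl⟩ := D.exists_mul ha
  rw [D.eval z y hy, D.norm_lam]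

omit [Fintype G] in
theorem mul (D : Datum H Y Z lam μ) {a b : G} (ha : a ∈ Z ⊔ Y) (hb : b ∈ Z ⊔ Y) :
    μ (a * b) = μ a * μ b := by
  obtain ⟨z, y, hy, rfl⟩ := D.exists_mul ha
  obtain ⟨w, x, hx, rfl⟩ := D.exists_mul hb
  have : (z : G) * y * (w * x) = ((z * w : Z) : G) * (y * x) := by
    rw [mul_assoc, ← mul_assoc y, D.comm w y, Subgroup.coe_mul]
    simp only [mul_assoc]
  rw [this, D.eval _ _ (Y.mul_mem hy hx), D.eval z y hy, D.eval w x hx, D.mul_lam]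

omit [Fintype G] in
theorem one (D : Datum H Y Z lam μ) : μ 1 = 1 := by
  have h1 := D.mul (one_mem _) (one_mem _)
  have h2 := D.norm 1 (one_mem _)
  rw [mul_one] at h1
  have h3 : μ 1 ≠ 0 := by rintro h; simp [h] at h2
  exact mul_left_cancel₀ h3 (by rw [← h1, mul_one])

omit [Fintype G] in
theorem eval_left (D : Datum H Y Z lam μ) (z : Z) : μ z = lam z := by
  simpa using D.eval z 1 (one_mem _)

omit [Fintype G] in
theorem eval_right (D : Datum H Y Z lam μ) {y : G} (hy : y ∈ Y) : μ y = 1 := by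
  have h1 := D.eval 1 y hy
  have h2 := D.eval 1 1 (one_mem _)
  simp only [Subgroup.coe_one, one_mul] at h1 h2
  rw [h1, ← h2, D.one]

/-- The set `Irr(H/Y, λ)`. -/
def source (D : Datum H Y Z lam μ) : Set (H → ℂ) :=
  {χ | χ ∈ Irr ↥H ∧
        0 < (innerProd ↥H χ (ind (Z.subgroupOf H)
          (fun z => lam ⟨((z : ↥H) : G), Subgroup.mem_subgroupOf.mp z.2⟩))).re ∧
        ∀ y : G, ∀ hy : y ∈ Y, χ ⟨y, SetLike.le_def.mp D.hYH hy⟩ = χ 1}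

open Classical in
/-- On a member of `Irr(H/Y, λ)`, the subgroup `Z ⊔ Y` acts through `μ`. -/
theorem source_mul (D : Datum H Y Z lam μ) {χ : H → ℂ} (hχ : χ ∈ D.source)
    (a : G) (ha : a ∈ Z ⊔ Y) (h : H) : χ (⟨a, D.le ha⟩ * h) = μ a * χ h := by
  obtain ⟨hirr, hpos, hker⟩ := hχ
  obtain ⟨m, R, hR, hχR, hn, hm⟩ := irr_unitary hirr
  have hz := central_scalar (Z.subgroupOf H) (fun z hz => Subgroup.mem_center_iff.2 fun g => by
      ext; exact D.comm ⟨z, Subgroup.mem_subgroupOf.1 hz⟩ g)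
    (fun z => lam ⟨((z : ↥H) : G), Subgroup.mem_subgroupOf.mp z.2⟩)
    (fun a b => D.mul_lam ⟨_, Subgroup.mem_subgroupOf.mp a.2⟩ ⟨_, Subgroup.mem_subgroupOf.mp b.2⟩)
    (fun a => D.norm_lam _) R hR hχR hirr hn hpos
  obtain ⟨z, y, hy, rfl⟩ := D.exists_mul ha
  have hy1 : R ⟨y, D.hYH hy⟩ = 1 := kernel R hR (by rw [← hχR, ← hχR]; exact hker y hy)
  have hz1 : R ⟨z, D.hZH z.2⟩ = lam z • 1 := hz ⟨⟨z, D.hZH z.2⟩, Subgroup.mem_subgroupOf.2 z.2⟩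
  have : (⟨z * y, D.le ha⟩ : H) = ⟨z, D.hZH z.2⟩ * ⟨y, D.hYH hy⟩ := rfl
  rw [D.eval z y hy, hχR, hχR, this, map_mul, map_mul, hy1, hz1]
  simp

open Classical in
theorem inner_source (D : Datum H Y Z lam μ) {χ ψ : H → ℂ} (hχ : χ ∈ D.source)
    (hψ : ψ ∈ D.source) : innerProd G (ind H χ) (ind H ψ) = innerProd H χ ψ :=
  inner_ind H (Z ⊔ Y) D.le D.normal μ D.norm D.sep χ ψ (D.source_mul hχ) (D.source_mul hψ)
    (fun x h => class_fn hψ.1.1 x h)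

theorem injOn (D : Datum H Y Z lam μ) : Set.InjOn (fun χ : H → ℂ => ind H χ) D.source := by
  classical
  intro χ hχ ψ hψ heq
  have heq' : ind H χ = ind H ψ := heq
  refine eq_of_inner hχ.1.2 hψ.1.2 ?_ ?_
  · rw [← D.inner_source hχ hψ, heq', D.inner_source hψ hψ, hψ.1.2]
  · rw [← D.inner_source hψ hχ, heq', D.inner_source hψ hψ, hψ.1.2]

theorem mapsTo (D : Datum H Y Z lam μ) :
    Set.MapsTo (fun χ : H → ℂ => ind H χ) D.source (IrrOver Z lam ∩ IrrOver Y (fun _ => 1)) := by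
  classical
  intro χ hχ
  have hext : ∀ a ∈ Z ⊔ Y, ext0 H χ a = χ 1 * μ a := fun a ha => by
    rw [ext0_of_mem (D.le ha), mul_comm, ← D.source_mul hχ a ha 1, mul_one]
  have hirr : ind H χ ∈ Irr G :=
    ⟨ind_isCharacter H hχ.1.1, by rw [D.inner_source hχ hχ, hχ.1.2]⟩
  refine ⟨⟨hirr, ?_⟩, ⟨hirr, ?_⟩⟩
  · show 0 < (innerProd G (ind H χ) (ind Z lam)).re
    rw [central_inner Z lam D.norm_lam hirr.1]
    · exact re_pos_one hirr
    · intro z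
      rw [ind_eq, ind_eq, mul_assoc, Finset.sum_mul]
      congr 1
      refine Finset.sum_congr rfl fun x _ => ?_
      rw [mul_assoc x⁻¹, ← D.comm, mul_assoc x⁻¹, one_mul, inv_mul_cancel_left, inv_mul_cancel,
        hext _ (Subgroup.mem_sup_left z.2), hext 1 (one_mem _), D.one, D.eval_left, mul_one]
  · show 0 < (innerProd G (ind H χ) (ind Y fun _ => 1)).re
    rw [frobenius Y _ hirr.1]
    obtain ⟨m, hm, h1⟩ := pos_one hχ.1
    have hconj : ∀ (x : G) (y : Y), x⁻¹ * y * x ∈ Z ⊔ Y := fun x y => by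
      simpa using D.normal.conj_mem y (Subgroup.mem_sup_right y.2) x⁻¹
    -- The inner product is a positive multiple of `∑ x, T x`; each `T x` is a sum of a linear
    -- character over `Y`, hence nonnegative, and `T 1 = |Y|`.
    let T : G → ℂ := fun x => ∑ y : Y, μ (x⁻¹ * y * x)
    have hT : ∀ x, 0 ≤ (T x).re := fun x => by
      refine sum_hom_nonneg (fun y : Y => μ (x⁻¹ * y * x)) fun a b => ?_
      rw [← D.mul (hconj x a) (hconj x b)]
      congr 1
      rw [Subgroup.coe_mul]; group
    have hT1 : T 1 = Fintype.card Y := by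
      simp only [T, inv_one, one_mul, mul_one]
      rw [Finset.sum_congr rfl fun y _ => D.eval_right (Subtype.prop y)]
      simp
    have hsum : ∑ y : Y, ind H χ y * (starRingEnd ℂ) 1 =
        (Fintype.card H : ℂ)⁻¹ * m * ∑ x, T x := by
      simp only [T]
      rw [Finset.sum_comm, Finset.mul_sum]
      refine Finset.sum_congr rfl fun y _ => ?_
      rw [ind_eq, map_one, mul_one, Finset.mul_sum, Finset.mul_sum]
      refine Finset.sum_congr rfl fun x _ => ?_
      rw [hext _ (hconj x y), h1]
      ring
    rw [hsum]
    have : (Fintype.card Y : ℂ)⁻¹ * ((Fintype.card H : ℂ)⁻¹ * m * ∑ x, T x) =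
        (((Fintype.card Y : ℝ)⁻¹ * ((Fintype.card H : ℝ)⁻¹ * m) : ℝ) : ℂ) * ∑ x, T x := by
      push_cast; ring
    rw [this, Complex.re_ofReal_mul]
    have hY : 0 < (Fintype.card Y : ℝ) := by exact_mod_cast Fintype.card_pos
    have hH : 0 < (Fintype.card H : ℝ) := by exact_mod_cast Fintype.card_pos
    have hm' : 0 < (m : ℝ) := by exact_mod_cast hm
    refine mul_pos (by positivity) ?_
    rw [Complex.re_sum]
    refine Finset.sum_pos' (fun x _ => hT x) ⟨1, Finset.mem_univ _, ?_⟩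
    rw [hT1]
    simpa using hY

theorem surjOn (D : Datum H Y Z lam μ) :
    Set.SurjOn (fun χ : H → ℂ => ind H χ) D.source (IrrOver Z lam ∩ IrrOver Y (fun _ => 1)) := by
  classical
  rintro θ ⟨⟨hirr, hposZ⟩, ⟨-, hposY⟩⟩
  obtain ⟨m, R, hR, hθ, hn, hm⟩ := irr_unitary hirr
  have hz : ∀ z : Z, R z = lam z • 1 :=
    central_scalar Z D.central lam D.mul_lam D.norm_lam R hR hθ hirr hn hposZ
  -- `e` is the projection onto the `Y`-fixed vectors, which is nonzero as `θ` lies over `1_Y`.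
  let e : Matrix (Fin m) (Fin m) ℂ := (Fintype.card Y : ℂ)⁻¹ • ∑ y : Y, R y
  have hye : ∀ y : Y, R y * e = e := fun y => by
    simp only [e]
    rw [mul_smul_comm, Finset.mul_sum, ← Equiv.sum_comp (Equiv.mulLeft y) (fun y : Y => R y)]
    simp
  have hee : e * e = e := by
    conv_lhs => enter [1]; simp only [e]
    rw [smul_mul_assoc, Finset.sum_mul, Finset.sum_congr rfl fun y _ => hye y, Finset.sum_const,
      Finset.card_univ, ← Nat.cast_smul_eq_nsmul ℂ, smul_smul, inv_mul_cancel₀ card_ne, one_smul]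
  have he0 : e ≠ 0 := by
    intro h0
    rw [frobenius Y _ hirr.1] at hposY
    have : (Fintype.card Y : ℂ)⁻¹ * ∑ y : Y, θ y * (starRingEnd ℂ) 1 = e.trace := by
      simp only [e, trace_smul, trace_sum, hθ, map_one, mul_one, smul_eq_mul]
    rw [this, h0] at hposY
    simp at hposY
  have hcomm : ∀ h ∈ H, R h * e = e * R h := fun h hh => by
    simp only [e]
    rw [mul_smul_comm, smul_mul_assoc, Finset.mul_sum, Finset.sum_mul]
    congr 1
    let c : Y ≃ Y := (MulAut.conj h).toEquiv.subtypeEquiv fun y =>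
      ⟨fun hy => D.conjY h hh y hy, fun hy => by
        have := D.conjY h⁻¹ (H.inv_mem hh) _ hy
        simpa [mul_assoc] using this⟩
    rw [← Equiv.sum_comp c (fun y : Y => R y * R h)]
    refine Finset.sum_congr rfl fun y _ => ?_
    have : ((c y : Y) : G) = h * y * h⁻¹ := rfl
    rw [this, ← map_mul, ← map_mul]
    congr 1
    group
  have hμe : ∀ a ∈ Z ⊔ Y, R a * e = μ a • e := fun a ha => by
    obtain ⟨z, y, hy, rfl⟩ := D.exists_mul ha
    rw [D.eval z y hy, map_mul, mul_assoc, hye ⟨y, hy⟩, hz, smul_mul_assoc, one_mul]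
  let ψ : H → ℂ := fun h => (R h * e).trace
  have hind : ind H ψ = θ := by
    funext g
    rw [hθ]
    exact (eq_ind H (Z ⊔ Y) D.le D.normal μ D.sep R hR hn e hee he0 hcomm hμe g).symm
  have hψchar : IsCharacter H ψ := by
    refine isCharacter_of_mul (fun h : H => R h * e) fun g k => ?_
    have : e * (R k * e) = R k * e := by rw [hcomm k k.2, ← mul_assoc, hee]
    rw [Subgroup.coe_mul, map_mul, mul_assoc, mul_assoc (R g) e, this]
  have hψmul : ∀ a (ha : a ∈ Z ⊔ Y) (h : H), ψ (⟨a, D.le ha⟩ * h) = μ a * ψ h := fun a ha h => by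
    simp only [ψ]
    rw [Subgroup.coe_mul, map_mul, mul_assoc, hcomm h h.2, ← mul_assoc, hμe a ha, smul_mul_assoc,
      trace_smul, smul_eq_mul]
  have hψirr : ψ ∈ Irr H := by
    refine ⟨hψchar, ?_⟩
    rw [← inner_ind H (Z ⊔ Y) D.le D.normal μ D.norm D.sep ψ ψ hψmul hψmul
      (fun x h => class_fn hψchar x h), hind, hirr.2]
  have hψ1 : ∀ a (ha : a ∈ Z ⊔ Y), ψ ⟨a, D.le ha⟩ = ψ 1 * μ a := fun a ha => by
    rw [mul_comm, ← hψmul a ha 1, mul_one]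
  refine ⟨ψ, ⟨hψirr, ?_, fun y hy => ?_⟩, hind⟩
  · rw [central_inner _ _ (fun a => D.norm_lam _) hψchar]
    · exact re_pos_one hψirr
    · intro z
      have hzZ := Subgroup.mem_subgroupOf.1 z.2
      rw [← D.eval_left]
      exact hψ1 z (Subgroup.mem_sup_left hzZ)
  · exact (hψ1 y (Subgroup.mem_sup_right hy)).trans (by rw [D.eval_right hy, mul_one])

end Datum

omit [Fintype G] in
/-- The extension by zero of `λ̃` is a suitable `μ`. Since `H` stabilizes `λ̃`, whether `u` does
depends only on the coset `u H`, so the condition on the representatives in `X` covers all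
`u ∉ H`. -/
theorem datum_of [Finite G] (H : Subgroup G) (X : Set G)
    (hX : ∀ u : G, ∃! x, x ∈ X ∧ x⁻¹ * u ∈ H)
    (Y Z : Subgroup G) (hYH : Y ≤ H) (hZH : Z ≤ H)
    (lam : ↥Z → ℂ) (hlam : lam ∈ Irr ↥Z)
    (ha : Z ≤ Subgroup.center G)
    (hb : ∀ h ∈ H, ∀ y ∈ Y, h * y * h⁻¹ ∈ Y)
    (hd : (Z ⊔ Y).Normal)
    (lamt : ↥(Z ⊔ Y) → ℂ)
    (hlamt_irr : lamt ∈ Irr ↥(Z ⊔ Y))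
    (hlamt_ext : ∀ z : ↥Z, lamt ⟨(z : G), SetLike.le_def.mp le_sup_left z.2⟩ = lam z)
    (hlamt_ker : ∀ y : G, ∀ hy : y ∈ Y,
      lamt ⟨y, SetLike.le_def.mp le_sup_right hy⟩ = lamt 1)
    (he : ∀ x ∈ X, x ∉ H → conjChar hd x lamt ≠ lamt) :
    Datum H Y Z lam (ext0 (Z ⊔ Y) lamt) := by
  classical
  have : Fintype G := Fintype.ofFinite G
  obtain ⟨hl, hln⟩ := irr_of_comm hlam fun a b => by
    ext; exact (Subgroup.mem_center_iff.1 (ha a.2) b).symm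
  have heval : ∀ z : Z, ∀ y ∈ Y, ext0 (Z ⊔ Y) lamt (z * y) = lam z := fun z y hy => by
    obtain ⟨m, R, hR, hχ, hn, hm⟩ := irr_unitary hlamt_irr
    have hy1 : R ⟨y, SetLike.le_def.mp le_sup_right hy⟩ = 1 :=
      kernel R hR (by rw [← hχ, ← hχ]; exact hlamt_ker y hy)
    have hzy : (z * y : G) ∈ Z ⊔ Y :=
      mul_mem (Subgroup.mem_sup_left z.2) (Subgroup.mem_sup_right hy)
    have h1 : (⟨z * y, hzy⟩ : ↥(Z ⊔ Y)) = ⟨(z : G), SetLike.le_def.mp le_sup_left z.2⟩ *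
      ⟨y, SetLike.le_def.mp le_sup_right hy⟩ := rfl
    rw [ext0_of_mem hzy, ← hlamt_ext z, hχ, hχ, h1, map_mul, hy1, mul_one]
  have hcomm : ∀ (z : Z) (u : G), u * z = z * u := fun z u =>
    Subgroup.mem_center_iff.1 (ha z.2) u
  refine ⟨hYH, hZH, ha, hb, hd, hl, hln, heval, fun u hu => ?_⟩
  by_contra! hcon
  obtain ⟨x, ⟨hxX, hxu⟩, -⟩ := hX u
  refine he x hxX (fun hxH => hu (by simpa using H.mul_mem hxH hxu)) ?_
  have hinv : ∀ h ∈ H, ∀ a ∈ Z ⊔ Y,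
      ext0 (Z ⊔ Y) lamt (h⁻¹ * a * h) = ext0 (Z ⊔ Y) lamt a := fun h hh a haM => by
    have : Z.Normal := ⟨fun z hz g => by
      rw [hcomm ⟨z, hz⟩ g]; simpa using hz⟩
    obtain ⟨z, hz, y, hy, rfl⟩ := Subgroup.mem_sup_of_normal_left.1 haM
    have h1 : h⁻¹ * (z * y) * h = z * (h⁻¹ * y * h) := by
      have := hcomm ⟨z, hz⟩ h⁻¹
      simp only [← mul_assoc]
      rw [this]
    have hy' : h⁻¹ * y * h ∈ Y := by simpa using hb h⁻¹ (H.inv_mem hh) y hy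
    rw [h1, heval ⟨z, hz⟩ y hy, heval ⟨z, hz⟩ _ hy']
  funext a
  have hxa : x⁻¹ * (a : G) * x ∈ Z ⊔ Y := by simpa using hd.conj_mem (a : G) a.2 x⁻¹
  have h1 : conjChar hd x lamt a = ext0 (Z ⊔ Y) lamt (x⁻¹ * a * x) := (ext0_of_mem hxa).symm
  rw [h1, ← hinv _ hxu _ hxa,
    show (x⁻¹ * u)⁻¹ * (x⁻¹ * a * x) * (x⁻¹ * u) = u⁻¹ * a * u by group, hcon a a.2, ext0_mem]

end RedLemma

open CT

/-- Reduction Lemma, bijectivity part.  Under hypotheses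
(a)–(e), induction `χ ↦ χ^U` is a bijection from `Irr(H/Y, λ)` onto
`Irr(U, λ) ∩ Irr(U, 1_Y)`. -/
theorem reduction_lemma_bijOn
    (U : Type) [Group U] [Finite U]
    (H : Subgroup U) (X : Set U)
    -- `X` is a set of representatives for the cosets `U/H`
    (hX : ∀ u : U, ∃! x, x ∈ X ∧ x⁻¹ * u ∈ H)
    (Y Z : Subgroup U) (hYH : Y ≤ H) (hZH : Z ≤ H)
    (lam : ↥Z → ℂ) (hlam : lam ∈ Irr ↥Z)
    -- (a) `Z ⊆ Z(U)`
    (ha : Z ≤ Subgroup.center U)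
    -- (b) `Y ⊴ H`
    (hb : ∀ h ∈ H, ∀ y ∈ Y, h * y * h⁻¹ ∈ Y)
    -- (c) `Z ∩ Y = 1`
    (hc : Z ⊓ Y = ⊥)
    -- (d) `ZY ⊴ U`
    (hd : (Z ⊔ Y).Normal)
    -- `λ̃` is the extension of `λ` to `ZY` with `Y ⊆ Ker λ̃`
    (lamt : ↥(Z ⊔ Y) → ℂ)
    (hlamt_irr : lamt ∈ Irr ↥(Z ⊔ Y))
    (hlamt_ext : ∀ z : ↥Z, lamt ⟨(z : U), SetLike.le_def.mp le_sup_left z.2⟩ = lam z)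
    (hlamt_ker : ∀ y : U, ∀ hy : y ∈ Y,
      lamt ⟨y, SetLike.le_def.mp le_sup_right hy⟩ = lamt 1)
    -- (e) `ˣλ̃ ≠ λ̃` for all `x ∈ X \ H`
    (he : ∀ x ∈ X, x ∉ H → conjChar hd x lamt ≠ lamt) :
    Set.BijOn (fun χ : ↥H → ℂ => ind H χ)
      -- `Irr(H/Y, λ)`
      {χ | χ ∈ Irr ↥H ∧
        0 < (innerProd ↥H χ (ind (Z.subgroupOf H)
          (fun z => lam ⟨((z : ↥H) : U), Subgroup.mem_subgroupOf.mp z.2⟩))).re ∧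
        ∀ y : U, ∀ hy : y ∈ Y, χ ⟨y, SetLike.le_def.mp hYH hy⟩ = χ 1}
      -- `Irr(U, λ) ∩ Irr(U, 1_Y)`
      (IrrOver Z lam ∩ IrrOver Y (fun _ => 1)) := by
  have := Fintype.ofFinite U
  have D := RedLemma.datum_of H X hX Y Z hYH hZH lam hlam ha hb hd lamt hlamt_irr hlamt_ext
    hlamt_ker he
  exact ⟨D.mapsTo, D.injOn, D.surjOn⟩
end
end

section
/- Let U be a finite group, H a subgroup of U, and X a set of representatives for the cosets U/H. Let Y and Z be subgroups of H and λ ∈ Irr(Z) such that: (a) Z ⊆ Z(U); (b) Y is normal in H; (c) Z ∩ Y = {1}; (d) ZY is normal in U; (e) for the unique extension λ̃ ∈ Irr(ZY) of λ with Y ⊆ Ker(λ̃) one has ˣλ̃ ≠ λ̃ for all x ∈ X ∖ H; and additionally (f) |X| = |Y|. Then Irr(U, λ) ∩ Irr(U, 1_Y) = Irr(U, λ); in particular, the map χ ↦ χ^U is a bijection from Irr(H/Y, λ) onto Irr(U, λ). -/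
/-!
Put `N = ZY` and let `L` be `λ̃` extended by zero to a function on `U`. As `Z` is central and `Y`
is normal in `H`, the group `H` fixes `L`; by (e) nothing outside `H` does, so `H` is the
stabilizer of `λ̃` and the statement is a Clifford correspondence with an additional claim: every
irreducible character over `λ` lies over `λ̃`.

* A character in `Irr(H/Y, λ)` is one on which `N` acts through `λ̃` (`over_iff`, based on Schur's
  lemma `schur`, and `kernel_mul`). For such a character, and `w ∉ H`, the inner product of `ψ`
  with its `w`-conjugate is multiplied by a nontrivial character of `N`, so it vanishes
  (`LinChar.eq_zero`). Hence induction to `U` preserves norms (`LinChar.norm_indU`), and sends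
  irreducible characters to irreducible characters (`isCharacter_ind`). The same orthogonality shows
  that `ψ` is the `λ̃`-isotypic part of `ψ^U` (`LinChar.recover`), so induction is injective.
* By (f), `|U : H| = |Y| = |N : Z|`. The sum of the `U`-conjugates of `λ̃` has a square norm over `N`
  that is already exhausted by its values on `Z`, so it vanishes on `N` outside `Z`
  (`LinChar.sum_conjugates`). Inducing the `λ̃`-isotypic part of `χ ∈ Irr(U, λ)` therefore only
  involves the action of `Z`, and gives back `χ` (`LinChar.indU_part`). The isotypic part is a
  character of `H`, afforded by the image of the idempotent of `λ̃` (`isCharacter_part`), and it has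
  norm `1` because induction preserves norms. This gives surjectivity.
* The degree of the `λ̃`-isotypic part of `χ ∈ Irr(U, λ)` equals the multiplicity of `1_Y` in `χ`;
  it is positive, so `χ ∈ Irr(U, 1_Y)`.

The comparison of conjugates and inner products uses that `χ(g⁻¹)` is the complex conjugate of
`χ(g)` (`trace_inv`).
-/

/-!
Reduction Lemma (Lemma `nred`, part 1) from "On the characters of the Sylow
p-subgroups of untwisted Chevalley groups".

We develop the needed character-theoretic notions concretely: a character of a
finite group `G` is the trace function of some finite-dimensional complex
representation; it is irreducible if moreover its self inner product is `1`.
Induction of characters, kernels, conjugate characters and the sets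
`Irr(G, λ)` are defined by the standard formulas.
-/

noncomputable section

open CT

namespace RL

/-! ### Complex representations of finite groups -/

section Rep

variable {G : Type} [Group G]

omit [Group G] in
lemma innerProd_eq_sum [Fintype G] (φ ψ : G → ℂ) :
    innerProd G φ ψ = (Nat.card G : ℂ)⁻¹ * ∑ g, φ g * (starRingEnd ℂ) (ψ g) := by
  rw [innerProd, finsum_eq_sum_of_fintype]

open scoped ComplexOrder in
/-- `χ(g⁻¹)` is the complex conjugate of `χ(g)`: the matrix `A = ∑ ρ(k)ᴴ ρ(k)` is positive
definite and intertwines `ρ(g)` with the conjugate transpose of `ρ(g⁻¹)`. -/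
lemma trace_inv [Finite G] {m : ℕ} (ρ : Representation ℂ G (Fin m → ℂ)) (g : G) :
    LinearMap.trace ℂ (Fin m → ℂ) (ρ g⁻¹) =
      (starRingEnd ℂ) (LinearMap.trace ℂ (Fin m → ℂ) (ρ g)) := by
  classical
  have := Fintype.ofFinite G
  let M : G → Matrix (Fin m) (Fin m) ℂ := fun g => LinearMap.toMatrix' (ρ g)
  have hM1 : M 1 = 1 := by simp [M]
  have hMm : ∀ a b, M (a * b) = M a * M b := fun a b => by
    simp only [M, map_mul]; exact LinearMap.toMatrix'_mul _ _
  have htr : ∀ a, LinearMap.trace ℂ (Fin m → ℂ) (ρ a) = (M a).trace := fun a => by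
    rw [LinearMap.trace_eq_matrix_trace ℂ (Pi.basisFun ℂ (Fin m))]; rfl
  let A : Matrix (Fin m) (Fin m) ℂ := ∑ k, (M k).conjTranspose * M k
  have hA : A.PosDef := by
    have : A = (M 1).conjTranspose * M 1 +
        ∑ k ∈ Finset.univ.erase 1, (M k).conjTranspose * M k :=
      (Finset.add_sum_erase _ _ (Finset.mem_univ 1)).symm
    rw [this, hM1]
    refine Matrix.PosDef.add_posSemidef ?_ ?_
    · simpa using Matrix.PosDef.one
    · exact Matrix.posSemidef_sum _ fun k _ => Matrix.posSemidef_conjTranspose_mul_self _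
  have hdet : IsUnit A.det := (Matrix.isUnit_iff_isUnit_det A).1 hA.isUnit
  have hint : (M g⁻¹).conjTranspose * A = A * M g := by
    simp only [A, Finset.mul_sum, Finset.sum_mul]
    rw [← Equiv.sum_comp (Equiv.mulRight g)]
    refine Finset.sum_congr rfl fun k _ => ?_
    have h1 : M k = M (k * g) * M g⁻¹ := by rw [← hMm]; simp
    rw [Equiv.coe_mulRight, ← mul_assoc, ← Matrix.conjTranspose_mul, ← hMm]
    simp [hMm, mul_assoc]
  have h2 : M g = A⁻¹ * ((M g⁻¹).conjTranspose * A) := by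
    rw [hint, ← mul_assoc, Matrix.nonsing_inv_mul _ hdet, one_mul]
  have h3 : (M g).trace = (M g⁻¹).conjTranspose.trace := by
    conv_lhs => rw [h2]
    rw [Matrix.trace_mul_comm, mul_assoc, Matrix.mul_nonsing_inv _ hdet, mul_one]
  rw [htr, htr, h3, Matrix.trace_conjTranspose]
  simp

lemma finrank_intertwining [Finite G] {m : ℕ} (ρ : Representation ℂ G (Fin m → ℂ)) :
    innerProd G (fun g => LinearMap.trace ℂ (Fin m → ℂ) (ρ g))
      (fun g => LinearMap.trace ℂ (Fin m → ℂ) (ρ g)) =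
      (Module.finrank ℂ (Representation.IntertwiningMap ρ ρ) : ℂ) := by
  have := Fintype.ofFinite G
  have : Invertible (Nat.card G : ℂ) := invertibleOfNonzero (by simp)
  rw [← Representation.card_inv_mul_sum_char_mul_char_eq_finrank, innerProd_eq_sum]
  simp only [Representation.character, trace_inv]

/-- Schur's lemma in terms of the norm of the character. -/
lemma schur [Finite G] {m : ℕ} (ρ : Representation ℂ G (Fin m → ℂ)) {χ : G → ℂ}
    (hχ : ∀ g, χ g = LinearMap.trace ℂ (Fin m → ℂ) (ρ g)) (h1 : innerProd G χ χ = 1)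
    (T : (Fin m → ℂ) →ₗ[ℂ] (Fin m → ℂ)) (hT : ∀ g, T ∘ₗ ρ g = ρ g ∘ₗ T) :
    ∃ c : ℂ, T = c • LinearMap.id := by
  obtain rfl : χ = fun g => LinearMap.trace ℂ (Fin m → ℂ) (ρ g) := funext hχ
  rw [finrank_intertwining] at h1
  have h1' : Module.finrank ℂ (Representation.IntertwiningMap ρ ρ) = 1 := by exact_mod_cast h1
  by_cases hm : (Representation.IntertwiningMap.id ρ) = 0
  · have : (LinearMap.id : (Fin m → ℂ) →ₗ[ℂ] (Fin m → ℂ)) = 0 := by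
      have := congrArg Representation.IntertwiningMap.toLinearMap hm
      simpa using this
    refine ⟨0, ?_⟩
    rw [zero_smul, ← LinearMap.comp_id T, this, LinearMap.comp_zero]
  · obtain ⟨c, hc⟩ := (finrank_eq_one_iff_of_nonzero' _ hm).1 h1' ⟨T, fun g => hT g⟩
    refine ⟨c, ?_⟩
    have := congrArg Representation.IntertwiningMap.toLinearMap hc
    simpa using this.symm

lemma irr_ne_zero {χ : G → ℂ} (hχ : χ ∈ Irr G) : χ ≠ 0 := by
  rintro rfl
  simpa [innerProd] using hχ.2

lemma irr_dim_pos {m : ℕ} {ρ : Representation ℂ G (Fin m → ℂ)} {χ : G → ℂ}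
    (hχ : ∀ g, χ g = LinearMap.trace ℂ (Fin m → ℂ) (ρ g)) (h0 : χ ≠ 0) : 0 < m := by
  rcases Nat.eq_zero_or_pos m with rfl | h
  · exact (h0 (funext fun g => by rw [hχ, Subsingleton.elim (ρ g) 0]; simp)).elim
  · exact h

/-- The trace of a representation cut down by a commuting idempotent is the character of
the representation on the image of the idempotent. -/
lemma isCharacter_of_proj {V : Type*} [AddCommGroup V] [Module ℂ V] [Module.Finite ℂ V]
    (ρ : Representation ℂ G V) (P : V →ₗ[ℂ] V) (hP : P ∘ₗ P = P)
    (hc : ∀ g, P ∘ₗ ρ g = ρ g ∘ₗ P) :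
    IsCharacter G (fun g => LinearMap.trace ℂ V (P ∘ₗ ρ g)) := by
  let W := LinearMap.range P
  have hW : ∀ g, ∀ w ∈ W, ρ g w ∈ W := by
    rintro g _ ⟨v, rfl⟩
    exact ⟨ρ g v, LinearMap.congr_fun (hc g) v⟩
  have hPW : ∀ w ∈ W, P w = w := by
    rintro _ ⟨v, rfl⟩
    exact LinearMap.congr_fun hP v
  let e : W ≃ₗ[ℂ] (Fin (Module.finrank ℂ W) → ℂ) := (Module.finBasis ℂ W).equivFun
  let σ : Representation ℂ G W :=
    { toFun := fun g => (ρ g).restrict (hW g)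
      map_one' := by ext; simp
      map_mul' := fun a b => by ext; simp }
  refine ⟨Module.finrank ℂ W,
    { toFun := fun g => e.conj (σ g)
      map_one' := by
        rw [map_one]; exact LinearEquiv.conj_id e
      map_mul' := fun a b => by
        rw [map_mul]; exact LinearEquiv.conj_comp e _ _ }, fun g => ?_⟩
  change _ = LinearMap.trace ℂ _ (e.conj (σ g))
  rw [LinearMap.trace_conj']
  have h := LinearMap.trace_restrict_eq_of_forall_mem W (P ∘ₗ ρ g)
    (fun v => ⟨ρ g v, rfl⟩)
  refine h.symm.trans ?_
  congr 1
  ext w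
  exact hPW _ (hW g w w.2)

lemma idem_eq_id {m : ℕ} (P : (Fin m → ℂ) →ₗ[ℂ] (Fin m → ℂ)) (hP : P ∘ₗ P = P)
    (ht : LinearMap.trace ℂ _ P = m) : P = LinearMap.id := by
  have hproj : LinearMap.IsProj (LinearMap.range P) P :=
    ⟨fun v => ⟨v, rfl⟩, by rintro _ ⟨v, rfl⟩; exact LinearMap.congr_fun hP v⟩
  have h := hproj.trace
  rw [ht] at h
  have h' : Module.finrank ℂ (LinearMap.range P) = Module.finrank ℂ (Fin m → ℂ) := by
    rw [Module.finrank_fin_fun]; exact_mod_cast h.symm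
  have htop := Submodule.eq_top_of_finrank_eq h'
  refine LinearMap.ext fun v => ?_
  exact hproj.map_id _ (htop ▸ Submodule.mem_top)

end Rep

/-! ### Induced characters -/

section Ind

variable {G : Type} [Group G]

open Classical in
/-- Extension by zero of a function on a subgroup to the whole group. -/
def ext0 (K : Subgroup G) (f : ↥K → ℂ) : G → ℂ := fun g => if h : g ∈ K then f ⟨g, h⟩ else 0

lemma ext0_mem {K : Subgroup G} (f : ↥K → ℂ) {g : G} (h : g ∈ K) : ext0 K f g = f ⟨g, h⟩ :=
  dif_pos h

lemma ext0_not_mem {K : Subgroup G} (f : ↥K → ℂ) {g : G} (h : g ∉ K) : ext0 K f g = 0 :=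
  dif_neg h

lemma sum_subgroup [Fintype G] (K : Subgroup G) [Fintype ↥K] (F : G → ℂ)
    (hF : ∀ g, g ∉ K → F g = 0) : ∑ g, F g = ∑ k : ↥K, F k := by
  classical
  rw [← Finset.sum_filter_of_ne (p := (· ∈ K)) fun g _ hg => not_not.1 fun h => hg (hF g h)]
  exact Finset.sum_subtype _ (by simp) F

lemma innerProd_ext0 [Fintype G] (K : Subgroup G) (f φ : ↥K → ℂ) :
    innerProd ↥K f φ =
      (Nat.card ↥K : ℂ)⁻¹ * ∑ g, ext0 K f g * (starRingEnd ℂ) (ext0 K φ g) := by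
  have := Fintype.ofFinite ↥K
  rw [innerProd_eq_sum, sum_subgroup K _ fun g hg => by rw [ext0_not_mem f hg, zero_mul]]
  simp only [ext0_mem _ (Subtype.prop _)]

lemma ind_eq_sum [Fintype G] (K : Subgroup G) (f : ↥K → ℂ) (g : G) :
    ind K f g = (Nat.card ↥K : ℂ)⁻¹ * ∑ x : G, ext0 K f (x⁻¹ * g * x) := by
  rw [ind, finsum_eq_sum_of_fintype]
  rfl

lemma sum_conj [Fintype G] (F : G → ℂ) (x : G) : ∑ g, F (x⁻¹ * g * x) = ∑ g, F g :=
  Fintype.sum_equiv (MulAut.conj x⁻¹).toEquiv _ _ fun g => by simp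

/-- Frobenius reciprocity. -/
lemma frobenius [Fintype G] (K : Subgroup G) (f : ↥K → ℂ) (χ : G → ℂ)
    (hχ : ∀ g x, χ (x⁻¹ * g * x) = χ g) :
    innerProd G χ (ind K f) =
      (Nat.card ↥K : ℂ)⁻¹ * ∑ g, χ g * (starRingEnd ℂ) (ext0 K f g) := by
  have h0 : (Nat.card G : ℂ) ≠ 0 := by simp
  have key : ∀ x : G, ∑ g, χ g * (starRingEnd ℂ) (ext0 K f (x⁻¹ * g * x)) =
      ∑ g, χ g * (starRingEnd ℂ) (ext0 K f g) := fun x => by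
    rw [← sum_conj (fun g => χ g * (starRingEnd ℂ) (ext0 K f g)) x]
    simp only [hχ]
  rw [innerProd_eq_sum]
  simp only [ind_eq_sum, map_mul, map_inv₀, map_natCast, map_sum]
  calc _ = (Nat.card G : ℂ)⁻¹ * ((Nat.card ↥K : ℂ)⁻¹ *
        ∑ x : G, ∑ g, χ g * (starRingEnd ℂ) (ext0 K f (x⁻¹ * g * x))) := by
        rw [Finset.sum_comm, Finset.mul_sum (s := Finset.univ) (a := (Nat.card ↥K : ℂ)⁻¹)]
        congr 1
        refine Finset.sum_congr rfl fun g _ => ?_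
        rw [mul_left_comm, Finset.mul_sum]
    _ = _ := by
        simp only [key, Finset.sum_const, Finset.card_univ, nsmul_eq_mul,
          Fintype.card_eq_nat_card]
        field_simp

lemma trace_blocks {ι : Type*} [Fintype ι] [DecidableEq ι] {m : ℕ}
    (T : (ι → Fin m → ℂ) →ₗ[ℂ] (ι → Fin m → ℂ)) :
    LinearMap.trace ℂ _ T =
      ∑ i, LinearMap.trace ℂ (Fin m → ℂ)
        (LinearMap.proj i ∘ₗ T ∘ₗ LinearMap.single ℂ (fun _ => Fin m → ℂ) i) := by
  rw [LinearMap.trace_eq_matrix_trace ℂ (Pi.basis fun _ : ι => Pi.basisFun ℂ (Fin m)),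
    Matrix.trace, Fintype.sum_sigma]
  refine Finset.sum_congr rfl fun i _ => ?_
  rw [LinearMap.trace_eq_matrix_trace ℂ (Pi.basisFun ℂ (Fin m)), Matrix.trace]
  refine Finset.sum_congr rfl fun j _ => ?_
  simp [LinearMap.toMatrix_apply]

/-- An induced character is a character: it is afforded by the image of the averaging
idempotent `F ↦ (u ↦ |H|⁻¹ ∑ ρ(h) F(uh))` on the space of functions on the group. -/
lemma isCharacter_ind [Finite G] (K : Subgroup G) {ψ : ↥K → ℂ} (hψ : IsCharacter ↥K ψ) :
    IsCharacter G (ind K ψ) := by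
  classical
  have := Fintype.ofFinite G
  have := Fintype.ofFinite ↥K
  obtain ⟨m, ρ, hρ⟩ := hψ
  have h0 : (Nat.card ↥K : ℂ) ≠ 0 := by simp
  let R : Representation ℂ G (G → Fin m → ℂ) :=
    { toFun := fun g => LinearMap.funLeft ℂ _ (fun u => g⁻¹ * u)
      map_one' := by ext; simp [LinearMap.funLeft]
      map_mul' := fun a b => by ext; simp [LinearMap.funLeft, mul_assoc] }
  have hR : ∀ g F u, R g F u = F (g⁻¹ * u) := fun _ _ _ => rfl
  let P : (G → Fin m → ℂ) →ₗ[ℂ] (G → Fin m → ℂ) :=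
    LinearMap.pi fun u => (Nat.card ↥K : ℂ)⁻¹ •
      ∑ k : ↥K, ρ k ∘ₗ LinearMap.proj (u * (k : G))
  have hP : ∀ F u, P F u = (Nat.card ↥K : ℂ)⁻¹ • ∑ k : ↥K, ρ k (F (u * (k : G))) :=
    fun F u => by simp [P]
  have hPP : P ∘ₗ P = P := by
    refine LinearMap.ext fun F => funext fun u => ?_
    rw [LinearMap.comp_apply, hP]
    have : ∀ k : ↥K, ρ k (P F (u * k)) = P F u := fun k => by
      rw [hP, hP, map_smul, map_sum]
      congr 1
      refine Fintype.sum_equiv (Equiv.mulLeft k) _ _ fun l => ?_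
      simp [mul_assoc]
    simp only [this, Finset.sum_const, Finset.card_univ, Fintype.card_eq_nat_card]
    rw [← Nat.cast_smul_eq_nsmul ℂ, smul_smul, inv_mul_cancel₀ h0, one_smul]
  have hPR : ∀ g, P ∘ₗ R g = R g ∘ₗ P := fun g => by
    refine LinearMap.ext fun F => funext fun u => ?_
    rw [LinearMap.comp_apply, LinearMap.comp_apply, hP, hR, hP]
    simp only [hR, mul_assoc]
  convert isCharacter_of_proj R P hPP hPR using 1
  funext g
  rw [ind_eq_sum, trace_blocks, Finset.mul_sum]
  refine Finset.sum_congr rfl fun u _ => ?_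
  have hb : LinearMap.proj u ∘ₗ (P ∘ₗ R g) ∘ₗ LinearMap.single ℂ (fun _ => Fin m → ℂ) u =
      (Nat.card ↥K : ℂ)⁻¹ • ∑ k : ↥K, if (k : G) = u⁻¹ * g * u then ρ k else 0 := by
    refine LinearMap.ext fun v => ?_
    simp only [LinearMap.comp_apply, LinearMap.proj_apply, hP, hR, LinearMap.smul_apply,
      LinearMap.sum_apply]
    congr 1
    refine Finset.sum_congr rfl fun k _ => ?_
    by_cases hk : (k : G) = u⁻¹ * g * u
    · rw [if_pos hk, show g⁻¹ * (u * (k : G)) = u by rw [hk]; group]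
      simp
    · rw [if_neg hk, LinearMap.single_apply, Pi.single_eq_of_ne, map_zero, LinearMap.zero_apply]
      intro h
      apply hk
      rw [← mul_right_inj u, ← mul_right_inj g⁻¹, h]
      group
  rw [hb, map_smul, map_sum, smul_eq_mul]
  congr 1
  by_cases hu : u⁻¹ * g * u ∈ K
  · rw [ext0_mem _ hu, Finset.sum_eq_single ⟨_, hu⟩]
    · simp [hρ]
    · intro k _ hk
      rw [if_neg fun h => hk (Subtype.ext h), map_zero]
    · simp
  · rw [ext0_not_mem _ hu, Finset.sum_eq_zero]
    intro k _
    rw [if_neg, map_zero]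
    rintro h
    exact hu (h ▸ k.2)

end Ind

/-! ### Clifford correspondence for an extended-by-zero linear character -/

section Clifford

variable {U : Type} [Group U] [Fintype U]

/-- A linear character of a normal subgroup `N`, extended by zero to a function `L` on `U`,
whose stabilizer in `U` is the subgroup `H`. -/
structure LinChar (N H : Subgroup U) (L : U → ℂ) : Prop where
  normal : N.Normal
  le : N ≤ H
  one : L 1 = 1
  out : ∀ n, n ∉ N → L n = 0
  mul : ∀ n ∈ N, ∀ m, L (n * m) = L n * L m
  conj : ∀ n, (starRingEnd ℂ) (L n) = L n⁻¹
  stab : ∀ h ∈ H, ∀ n, L (h⁻¹ * n * h) = L n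
  ne : ∀ u, u ∉ H → ∃ n ∈ N, L (u⁻¹ * n * u) ≠ L n

/-- A function supported on `H`, invariant under `H`-conjugation, on which `N` acts through
the linear character `L`. -/
structure Semi (N H : Subgroup U) (L f : U → ℂ) : Prop where
  out : ∀ g, g ∉ H → f g = 0
  mul : ∀ n ∈ N, ∀ g, f (n * g) = L n * f g
  conj : ∀ h ∈ H, ∀ g, f (h⁻¹ * g * h) = f g

/-- The induction formula for functions extended by zero from `H`. -/
def indU (H : Subgroup U) (f : U → ℂ) : U → ℂ := fun g =>
  (Nat.card ↥H : ℂ)⁻¹ * ∑ u : U, f (u⁻¹ * g * u)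

variable {N H : Subgroup U} {L f χ : U → ℂ}

namespace LinChar

omit [Fintype U] in
lemma conj_mul_self (D : LinChar N H L) {n : U} (hn : n ∈ N) :
    (starRingEnd ℂ) (L n) * L n = 1 := by
  rw [D.conj, ← D.mul _ (N.inv_mem hn), inv_mul_cancel, D.one]

omit [Fintype U] in
lemma conj_mem' (D : LinChar N H L) {n : U} (hn : n ∈ N) (u : U) : u⁻¹ * n * u ∈ N := by
  simpa using D.normal.conj_mem n hn u⁻¹

omit [Fintype U] in
/-- If a quantity is multiplied by `conj L(n) · L(u⁻¹nu)` for every `n ∈ N` and `u ∉ H`, then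
it vanishes. -/
lemma eq_zero (D : LinChar N H L) {u : U} (hu : u ∉ H) (Q : ℂ)
    (hQ : ∀ n ∈ N, Q = (starRingEnd ℂ) (L n) * L (u⁻¹ * n * u) * Q) : Q = 0 := by
  obtain ⟨n, hn, hne⟩ := D.ne u hu
  by_contra h
  have h1 : (starRingEnd ℂ) (L n) * L (u⁻¹ * n * u) = 1 :=
    mul_right_cancel₀ h (by rw [← hQ n hn, one_mul])
  apply hne
  calc L (u⁻¹ * n * u) = ((starRingEnd ℂ) (L n) * L n) * L (u⁻¹ * n * u) := by
        rw [D.conj_mul_self hn, one_mul]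
    _ = L n * ((starRingEnd ℂ) (L n) * L (u⁻¹ * n * u)) := by ring
    _ = L n := by rw [h1, mul_one]

open Classical in
lemma orth (D : LinChar N H L) (u : U) :
    ∑ n, (starRingEnd ℂ) (L n) * L (u⁻¹ * n * u) = if u ∈ H then (Nat.card ↥N : ℂ) else 0 := by
  have := Fintype.ofFinite ↥N
  split_ifs with hu
  · simp only [D.stab u hu]
    rw [sum_subgroup N _ fun n hn => by rw [D.out n hn, mul_zero]]
    simp [D.conj_mul_self (Subtype.prop _)]
  · refine D.eq_zero hu _ fun n hn => ?_
    rw [Finset.mul_sum, ← Equiv.sum_comp (Equiv.mulLeft n)]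
    refine Finset.sum_congr rfl fun g _ => ?_
    rw [Equiv.coe_mulLeft, D.mul n hn, map_mul,
      show u⁻¹ * (n * g) * u = (u⁻¹ * n * u) * (u⁻¹ * g * u) by group,
      D.mul _ (D.conj_mem' hn u)]
    ring

open Classical in
lemma sum_ite_mem (H : Subgroup U) (c : ℂ) :
    ∑ u : U, (if u ∈ H then c else 0) = Nat.card ↥H * c := by
  have := Fintype.ofFinite ↥H
  rw [sum_subgroup H _ fun u hu => if_neg hu]
  simp

/-- Induction from `H` to `U` preserves the norm. -/
lemma norm_indU (D : LinChar N H L) (S : Semi N H L f) :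
    (Nat.card U : ℂ)⁻¹ * ∑ g, indU H f g * (starRingEnd ℂ) (indU H f g) =
      (Nat.card ↥H : ℂ)⁻¹ * ∑ g, f g * (starRingEnd ℂ) (f g) := by
  classical
  have h0 : (Nat.card ↥H : ℂ) ≠ 0 := by simp
  have hU : (Nat.card U : ℂ) ≠ 0 := by simp
  have key : ∀ w : U, ∑ g, f (w⁻¹ * g * w) * (starRingEnd ℂ) (f g) =
      if w ∈ H then ∑ g, f g * (starRingEnd ℂ) (f g) else 0 := fun w => by
    split_ifs with hw
    · simp only [S.conj w hw]
    · refine D.eq_zero hw _ fun n hn => ?_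
      rw [Finset.mul_sum, ← Equiv.sum_comp (Equiv.mulLeft n)]
      refine Finset.sum_congr rfl fun g _ => ?_
      rw [Equiv.coe_mulLeft, S.mul n hn, map_mul,
        show w⁻¹ * (n * g) * w = (w⁻¹ * n * w) * (w⁻¹ * g * w) by group,
        S.mul _ (D.conj_mem' hn w)]
      ring
  have key2 : ∀ u v : U, ∑ g, f (u⁻¹ * g * u) * (starRingEnd ℂ) (f (v⁻¹ * g * v)) =
      if v⁻¹ * u ∈ H then ∑ g, f g * (starRingEnd ℂ) (f g) else 0 := fun u v => by
    rw [← key, ← sum_conj (fun g => f ((v⁻¹ * u)⁻¹ * g * (v⁻¹ * u)) * (starRingEnd ℂ) (f g)) v]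
    refine Finset.sum_congr rfl fun g _ => ?_
    congr 2
    group
  have key3 : ∀ v : U, ∑ u, ∑ g, f (u⁻¹ * g * u) * (starRingEnd ℂ) (f (v⁻¹ * g * v)) =
      Nat.card ↥H * ∑ g, f g * (starRingEnd ℂ) (f g) := fun v => by
    simp only [key2]
    rw [← sum_ite_mem, ← Equiv.sum_comp (Equiv.mulLeft v⁻¹) (fun u => if u ∈ H then _ else _)]
    rfl
  have : ∑ g, indU H f g * (starRingEnd ℂ) (indU H f g) = (Nat.card ↥H : ℂ)⁻¹ ^ 2 *
      ∑ v, ∑ u, ∑ g, f (u⁻¹ * g * u) * (starRingEnd ℂ) (f (v⁻¹ * g * v)) := by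
    simp only [indU, map_mul, map_inv₀, map_natCast, map_sum]
    rw [Finset.sum_congr rfl fun v _ => Finset.sum_comm, Finset.sum_comm, Finset.mul_sum]
    refine Finset.sum_congr rfl fun g _ => ?_
    rw [mul_mul_mul_comm, Finset.sum_mul_sum, Finset.sum_comm, sq]
  rw [this]
  simp only [key3, Finset.sum_const, Finset.card_univ, nsmul_eq_mul, Fintype.card_eq_nat_card]
  field_simp

/-- A semi-invariant function is recovered from the function it induces by projecting to the
`L`-isotypic part. -/
lemma recover (D : LinChar N H L) (S : Semi N H L f) (h : U) :
    (Nat.card ↥N : ℂ)⁻¹ * ∑ n, (starRingEnd ℂ) (L n) * indU H f (n * h) = f h := by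
  classical
  have h0 : (Nat.card ↥H : ℂ) ≠ 0 := by simp
  have hN : (Nat.card ↥N : ℂ) ≠ 0 := by simp
  have key : ∀ u : U, ∑ n, (starRingEnd ℂ) (L n) * f (u⁻¹ * (n * h) * u) =
      if u ∈ H then Nat.card ↥N * f h else 0 := fun u => by
    have : ∑ n, (starRingEnd ℂ) (L n) * f (u⁻¹ * (n * h) * u) =
        (∑ n, (starRingEnd ℂ) (L n) * L (u⁻¹ * n * u)) * f (u⁻¹ * h * u) := by
      rw [Finset.sum_mul]
      refine Finset.sum_congr rfl fun n _ => ?_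
      by_cases hn : n ∈ N
      · rw [show u⁻¹ * (n * h) * u = (u⁻¹ * n * u) * (u⁻¹ * h * u) by group,
          S.mul _ (D.conj_mem' hn u)]
        ring
      · simp [D.out n hn]
    rw [this, D.orth]
    split_ifs with hu
    · rw [S.conj u hu]
    · rw [zero_mul]
  have : ∑ n, (starRingEnd ℂ) (L n) * indU H f (n * h) =
      (Nat.card ↥H : ℂ)⁻¹ * ∑ u, ∑ n, (starRingEnd ℂ) (L n) * f (u⁻¹ * (n * h) * u) := by
    rw [Finset.sum_comm, Finset.mul_sum]
    refine Finset.sum_congr rfl fun n _ => ?_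
    rw [indU, ← Finset.mul_sum]
    ring
  rw [this]
  simp only [key]
  rw [sum_ite_mem]
  field_simp

/-- If `|U| |Z| = |H| |N|`, the sum of the conjugates of `L` is supported on the central subgroup
`Z`: its square norm over `N` is already exhausted by its values on `Z`. -/
lemma sum_conjugates (D : LinChar N H L) {Z : Subgroup U} (hZN : Z ≤ N)
    (hZ : Z ≤ Subgroup.center U)
    (hcard : Nat.card U * Nat.card ↥Z = Nat.card ↥H * Nat.card ↥N) {n : U} (hn : n ∉ Z) :
    ∑ u : U, L (u⁻¹ * n * u) = 0 := by
  classical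
  have := Fintype.ofFinite ↥Z
  set S : U → ℂ := fun n => ∑ u : U, L (u⁻¹ * n * u) with hS
  have hcent : ∀ z ∈ Z, ∀ u : U, u⁻¹ * z * u = z := fun z hz u => by
    rw [mul_assoc, ← Subgroup.mem_center_iff.1 (hZ hz) u, inv_mul_cancel_left]
  have hSz : ∀ z ∈ Z, (starRingEnd ℂ) (S z) * S z = (Nat.card U : ℂ) ^ 2 := fun z hz => by
    have : S z = Nat.card U * L z := by
      simp only [hS, hcent z hz, Finset.sum_const, Finset.card_univ, nsmul_eq_mul,
        Fintype.card_eq_nat_card]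
    rw [this, map_mul, map_natCast, mul_mul_mul_comm, D.conj_mul_self (hZN hz)]
    ring
  have key2 : ∀ v u : U, ∑ g, (starRingEnd ℂ) (L (v⁻¹ * g * v)) * L (u⁻¹ * g * u) =
      if v⁻¹ * u ∈ H then (Nat.card ↥N : ℂ) else 0 := fun v u => by
    rw [← D.orth, ← sum_conj (fun g => (starRingEnd ℂ) (L g) *
      L ((v⁻¹ * u)⁻¹ * g * (v⁻¹ * u))) v]
    refine Finset.sum_congr rfl fun g _ => ?_
    congr 2
    group
  have htot : ∑ g, (starRingEnd ℂ) (S g) * S g =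
      Nat.card U * (Nat.card ↥H * Nat.card ↥N : ℂ) := by
    calc _ = ∑ v : U, ∑ u, ∑ g, (starRingEnd ℂ) (L (v⁻¹ * g * v)) * L (u⁻¹ * g * u) := by
          rw [Finset.sum_congr rfl fun v _ => Finset.sum_comm, Finset.sum_comm]
          refine Finset.sum_congr rfl fun g _ => ?_
          rw [hS, map_sum, Finset.sum_mul_sum]
      _ = ∑ v : U, (Nat.card ↥H * Nat.card ↥N : ℂ) := by
          refine Finset.sum_congr rfl fun v _ => ?_
          simp only [key2]
          rw [← sum_ite_mem,
            ← Equiv.sum_comp (Equiv.mulLeft v⁻¹) (fun u => if u ∈ H then _ else _)]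
          rfl
      _ = _ := by simp
  have hZtot : ∑ g, (if g ∈ Z then (starRingEnd ℂ) (S g) * S g else 0) =
      Nat.card U * (Nat.card ↥H * Nat.card ↥N : ℂ) := by
    rw [sum_subgroup Z _ fun g hg => if_neg hg]
    simp only [Subtype.prop, if_true, hSz, Finset.sum_const, Finset.card_univ, nsmul_eq_mul,
        Fintype.card_eq_nat_card]
    rw [← Nat.cast_mul (Nat.card ↥H), ← hcard]
    push_cast
    ring
  have hdiff : ∑ g, (if g ∈ Z then 0 else Complex.normSq (S g)) = 0 := by
    have : ∑ g, (if g ∈ Z then 0 else (starRingEnd ℂ) (S g) * S g) = 0 := by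
      have h := sub_eq_zero.2 (htot.trans hZtot.symm)
      refine Eq.trans ?_ h
      rw [← Finset.sum_sub_distrib]
      refine Finset.sum_congr rfl fun g _ => ?_
      split_ifs <;> simp
    apply Complex.ofReal_injective
    rw [Complex.ofReal_sum, Complex.ofReal_zero, ← this]
    refine Finset.sum_congr rfl fun g _ => ?_
    split_ifs
    · simp
    · rw [mul_comm, Complex.mul_conj]
  have := (Finset.sum_eq_zero_iff_of_nonneg fun g _ => by
    split_ifs
    exacts [le_rfl, Complex.normSq_nonneg _]).1 hdiff n (Finset.mem_univ n)
  rw [if_neg hn] at this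
  exact Complex.normSq_eq_zero.1 this

/-- The `L`-isotypic part of a class function `χ`. -/
def part (N : Subgroup U) (L χ : U → ℂ) : U → ℂ := fun g =>
  (Nat.card ↥N : ℂ)⁻¹ * ∑ n, (starRingEnd ℂ) (L n) * χ (n * g)

lemma semi_part (D : LinChar N H L) (hχ : ∀ g x, χ (x⁻¹ * g * x) = χ g) :
    Semi N H L (part N L χ) := by
  have hl : ∀ n ∈ N, ∀ g, part N L χ (n * g) = L n * part N L χ g := fun n hn g => by
    rw [part, part, mul_left_comm]
    congr 1
    rw [Finset.mul_sum]
    refine Fintype.sum_equiv (Equiv.mulRight n) _ _ fun m => ?_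
    rw [Equiv.coe_mulRight, ← mul_assoc m]
    by_cases hm : m ∈ N
    · have : (starRingEnd ℂ) (L m) = L n * (starRingEnd ℂ) (L (m * n)) := by
        rw [D.mul m hm, map_mul, mul_left_comm, mul_comm (L n), D.conj_mul_self hn, mul_one]
      rw [this]
      ring
    · have : m * n ∉ N := fun h => hm ((N.mul_mem_cancel_right hn).1 h)
      simp [D.out _ hm, D.out _ this]
  have hc : ∀ h ∈ H, ∀ g, part N L χ (h⁻¹ * g * h) = part N L χ g := fun h hh g => by
    rw [part, part]
    congr 1
    refine Fintype.sum_equiv (MulAut.conj h).toEquiv _ _ fun n => ?_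
    have h1 : L (h * n * h⁻¹) = L n := by
      rw [← D.stab h hh]
      congr 1
      group
    have h2 : χ (n * (h⁻¹ * g * h)) = χ (h * n * h⁻¹ * g) := by
      rw [← hχ (h * n * h⁻¹ * g) h]
      congr 1
      group
    change _ = (starRingEnd ℂ) (L (h * n * h⁻¹)) * χ (h * n * h⁻¹ * g)
    rw [h1, h2]
  refine ⟨fun g hg => ?_, hl, hc⟩
  refine D.eq_zero (u := g⁻¹) (fun h => hg (inv_inv g ▸ H.inv_mem h)) _ fun n hn => ?_
  conv_lhs => rw [← hc n (D.le hn) g]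
  have h1 : g * n * g⁻¹ ∈ N := D.normal.conj_mem n hn g
  rw [D.conj, show n⁻¹ * g * n = n⁻¹ * ((g * n * g⁻¹) * g) by group,
    hl _ (N.inv_mem hn), hl _ h1, ← mul_assoc, inv_inv]

/-- If the central subgroup `Z` acts on `χ` through `L`, then `χ` is induced from its
`L`-isotypic part. -/
lemma indU_part (D : LinChar N H L) {Z : Subgroup U} (hZN : Z ≤ N)
    (hZ : Z ≤ Subgroup.center U)
    (hcard : Nat.card U * Nat.card ↥Z = Nat.card ↥H * Nat.card ↥N)
    (hχ : ∀ g x, χ (x⁻¹ * g * x) = χ g) (hχZ : ∀ z ∈ Z, ∀ g, χ (z * g) = L z * χ g) :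
    indU H (part N L χ) = χ := by
  classical
  have := Fintype.ofFinite ↥Z
  have hH0 : (Nat.card ↥H : ℂ) ≠ 0 := by simp
  have hN0 : (Nat.card ↥N : ℂ) ≠ 0 := by simp
  have hcent : ∀ z ∈ Z, ∀ u : U, u⁻¹ * z * u = z := fun z hz u => by
    rw [mul_assoc, ← Subgroup.mem_center_iff.1 (hZ hz) u, inv_mul_cancel_left]
  funext g
  have h1 : ∀ u : U, ∑ n, (starRingEnd ℂ) (L n) * χ (n * (u⁻¹ * g * u)) =
      ∑ n, (starRingEnd ℂ) (L (u⁻¹ * n * u)) * χ (n * g) := fun u => by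
    rw [← sum_conj _ u]
    refine Finset.sum_congr rfl fun n _ => ?_
    rw [← hχ (n * g) u]
    congr 2
    group
  have h2 : ∑ u : U, ∑ n, (starRingEnd ℂ) (L n) * χ (n * (u⁻¹ * g * u)) =
      Nat.card ↥Z * Nat.card U * χ g := by
    simp only [h1]
    rw [Finset.sum_comm]
    simp only [← Finset.sum_mul, ← map_sum]
    rw [sum_subgroup Z _ fun n hn => by
      rw [D.sum_conjugates hZN hZ hcard hn, map_zero, zero_mul]]
    have : ∀ z : ↥Z, (starRingEnd ℂ) (∑ u : U, L (u⁻¹ * z * u)) * χ (z * g) =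
        Nat.card U * χ g := fun z => by
      simp only [hcent z z.2, Finset.sum_const, Finset.card_univ, nsmul_eq_mul,
        Fintype.card_eq_nat_card]
      rw [hχZ z z.2, map_mul, map_natCast, mul_assoc, ← mul_assoc _ (L z),
        D.conj_mul_self (hZN z.2), one_mul]
    simp only [this, Finset.sum_const, Finset.card_univ, nsmul_eq_mul,
      Fintype.card_eq_nat_card]
    ring
  have hcard' : (Nat.card U : ℂ) * Nat.card ↥Z = Nat.card ↥H * Nat.card ↥N := by
    exact_mod_cast hcard
  simp only [indU, part]
  rw [← Finset.mul_sum, h2, mul_comm (Nat.card ↥Z : ℂ), hcard']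
  field_simp

end LinChar

end Clifford

/-! ### Irreducible characters over central and normal subgroups -/

section Central

variable {G : Type} [Group G]

lemma class_fun {χ : G → ℂ} (hχ : IsCharacter G χ) (g x : G) : χ (x⁻¹ * g * x) = χ g := by
  obtain ⟨m, ρ, hρ⟩ := hχ
  rw [hρ, hρ, map_mul, LinearMap.trace_mul_comm, ← map_mul, ← mul_assoc,
    mul_inv_cancel, one_mul]

lemma conj_char [Finite G] {χ : G → ℂ} (hχ : IsCharacter G χ) (g : G) :
    (starRingEnd ℂ) (χ g) = χ g⁻¹ := by
  obtain ⟨m, ρ, hρ⟩ := hχ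
  rw [hρ, hρ, trace_inv]

lemma mul_char {χ : G → ℂ} (hχ : IsCharacter G χ) (h1 : χ 1 = 1) (a b : G) :
    χ (a * b) = χ a * χ b := by
  obtain ⟨m, ρ, hρ⟩ := hχ
  obtain rfl : m = 1 := by
    rw [hρ, map_one, LinearMap.trace_one, Module.finrank_fin_fun] at h1
    exact_mod_cast h1
  have htr : ∀ a, χ a = (LinearMap.toMatrix' (ρ a)) 0 0 := fun a => by
    rw [hρ, LinearMap.trace_eq_matrix_trace ℂ (Pi.basisFun ℂ (Fin 1)), Matrix.trace_fin_one]
    rfl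
  rw [htr, htr, htr, map_mul, LinearMap.toMatrix'_mul, Matrix.mul_apply, Fin.sum_univ_one]

lemma irr_one_pos {χ : G → ℂ} (hχ : χ ∈ Irr G) : 0 < (χ 1).re := by
  obtain ⟨m, ρ, hρ⟩ := hχ.1
  have := irr_dim_pos hρ (irr_ne_zero hχ)
  rw [hρ, map_one, LinearMap.trace_one, Module.finrank_fin_fun]
  simpa using this

lemma central_scalar [Finite G] {χ : G → ℂ} (hχ : χ ∈ Irr G) {z : G}
    (hz : z ∈ Subgroup.center G) : ∃ c : ℂ, ∀ g, χ (z * g) = c * χ g := by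
  obtain ⟨⟨m, ρ, hρ⟩, h1⟩ := hχ
  obtain ⟨c, hc⟩ := schur ρ hρ h1 (ρ z) fun g => by
    change ρ z * ρ g = ρ g * ρ z
    rw [← map_mul, ← map_mul, Subgroup.mem_center_iff.1 hz g]
  refine ⟨c, fun g => ?_⟩
  rw [hρ, hρ, map_mul, hc, smul_mul_assoc, map_smul, smul_eq_mul]
  rfl

/-- Irreducible characters of abelian groups are linear. -/
lemma irr_comm_one [Finite G] {χ : G → ℂ} (hχ : χ ∈ Irr G)
    (hG : ∀ a b : G, a * b = b * a) : χ 1 = 1 := by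
  have := Fintype.ofFinite G
  have h0 : (Nat.card G : ℂ) ≠ 0 := by simp
  have hpos := irr_one_pos hχ
  have key : ∀ g, χ g * (starRingEnd ℂ) (χ g) = χ 1 * χ 1 := fun g => by
    obtain ⟨c, hc⟩ := central_scalar hχ (z := g) (Subgroup.mem_center_iff.2 fun a => hG a g)
    have h2 : χ 1 = c * χ g⁻¹ := by rw [← hc, mul_inv_cancel]
    have h3 : χ g = c * χ 1 := by rw [← hc, mul_one]
    rw [conj_char hχ.1, h3, mul_right_comm, ← h2]
  have h1 := hχ.2
  rw [innerProd_eq_sum] at h1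
  simp only [key, Finset.sum_const, Finset.card_univ, nsmul_eq_mul,
    Fintype.card_eq_nat_card] at h1
  rw [inv_mul_cancel_left₀ h0] at h1
  rcases mul_self_eq_one_iff.1 h1 with h | h
  · exact h
  · rw [h] at hpos
    norm_num at hpos

/-- For a linear character `f` of a central subgroup `Z`, an irreducible character lies over `f`
exactly when `Z` acts on it through `f`. -/
lemma over_iff [Finite G] {χ : G → ℂ} (hχ : χ ∈ Irr G) (Z : Subgroup G)
    (hZ : Z ≤ Subgroup.center G) (f : ↥Z → ℂ) (hf1 : f 1 = 1)
    (hfm : ∀ a b, f (a * b) = f a * f b) (hfc : ∀ a, (starRingEnd ℂ) (f a) = f a⁻¹) :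
    0 < (innerProd G χ (ind Z f)).re ↔ ∀ (z : ↥Z) g, χ (z * g) = f z * χ g := by
  have := Fintype.ofFinite G
  have := Fintype.ofFinite ↥Z
  have h0 : (Nat.card ↥Z : ℂ) ≠ 0 := by simp
  have hff : ∀ z, f z * (starRingEnd ℂ) (f z) = 1 := fun z => by
    rw [hfc, ← hfm, mul_inv_cancel, hf1]
  have hsum : innerProd G χ (ind Z f) =
      (Nat.card ↥Z : ℂ)⁻¹ * ∑ z : ↥Z, χ z * (starRingEnd ℂ) (f z) := by
    rw [frobenius Z f χ (class_fun hχ.1),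
      sum_subgroup Z _ fun g hg => by rw [ext0_not_mem f hg, map_zero, mul_zero]]
    simp only [ext0_mem _ (Subtype.prop _)]
  constructor
  · intro hpos z
    obtain ⟨c, hc⟩ := central_scalar hχ (hZ z.2)
    suffices c = f z by rwa [← this]
    set Q := ∑ z : ↥Z, χ z * (starRingEnd ℂ) (f z) with hQ
    have hQ0 : Q ≠ 0 := fun h => by simp [hsum, h] at hpos
    have hQz : Q = (c * (starRingEnd ℂ) (f z)) * Q := by
      conv_lhs => rw [hQ, ← Equiv.sum_comp (Equiv.mulLeft z)]
      rw [hQ, Finset.mul_sum]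
      refine Finset.sum_congr rfl fun w _ => ?_
      rw [Equiv.coe_mulLeft, Subgroup.coe_mul, hc, hfm, map_mul]
      ring
    have h1 : c * (starRingEnd ℂ) (f z) = 1 :=
      mul_right_cancel₀ hQ0 (by rw [← hQz, one_mul])
    calc c = c * (f z * (starRingEnd ℂ) (f z)) := by rw [hff, mul_one]
      _ = (c * (starRingEnd ℂ) (f z)) * f z := by ring
      _ = f z := by rw [h1, one_mul]
  · intro h
    have : ∀ z : ↥Z, χ z * (starRingEnd ℂ) (f z) = χ 1 := fun z => by
      rw [← mul_one (z : G), h, mul_right_comm, hff, one_mul]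
    rw [hsum]
    simp only [this, Finset.sum_const, Finset.card_univ, nsmul_eq_mul,
      Fintype.card_eq_nat_card]
    rw [inv_mul_cancel_left₀ h0]
    exact irr_one_pos hχ

/-- A subgroup on which a character is constant acts trivially: the average of its elements is an
idempotent of full trace. -/
lemma kernel_mul [Finite G] {χ : G → ℂ} (hχ : IsCharacter G χ) (Y : Subgroup G)
    (hY : ∀ y ∈ Y, χ y = χ 1) {y : G} (hy : y ∈ Y) (g : G) : χ (y * g) = χ g := by
  obtain ⟨m, ρ, hρ⟩ := hχ
  have := Fintype.ofFinite ↥Y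
  have h0 : (Nat.card ↥Y : ℂ) ≠ 0 := by simp
  let P : Module.End ℂ (Fin m → ℂ) := (Nat.card ↥Y : ℂ)⁻¹ • ∑ y : ↥Y, ρ y
  have hyP : ∀ y : ↥Y, ρ y * P = P := fun y => by
    simp only [P]
    rw [mul_smul_comm, Finset.mul_sum]
    congr 1
    refine Fintype.sum_equiv (Equiv.mulLeft y) _ _ fun l => ?_
    simp
  have hPP : P * P = P := by
    have : P * P = (Nat.card ↥Y : ℂ)⁻¹ • ∑ y : ↥Y, ρ y * P := by
      rw [← Finset.sum_mul, ← smul_mul_assoc]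
    rw [this]
    simp only [hyP, Finset.sum_const, Finset.card_univ, Fintype.card_eq_nat_card]
    rw [← Nat.cast_smul_eq_nsmul ℂ, smul_smul, inv_mul_cancel₀ h0, one_smul]
  have hid : P = LinearMap.id := by
    refine idem_eq_id P hPP ?_
    simp only [P]
    rw [map_smul, map_sum]
    simp only [← hρ, hY _ (Subtype.prop _), Finset.sum_const, Finset.card_univ,
      Fintype.card_eq_nat_card, nsmul_eq_mul]
    rw [smul_eq_mul, inv_mul_cancel_left₀ h0, hρ, map_one, LinearMap.trace_one,
      Module.finrank_fin_fun]
  have h1 : ρ y = 1 := by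
    have := hyP ⟨y, hy⟩
    rwa [hid, ← Module.End.one_eq_id, mul_one] at this
  rw [hρ, hρ, map_mul, h1, one_mul]

end Central

/-! ### The isotypic part of a character -/

/-- The `L`-isotypic part of a character of `U` is a character of `H`, afforded by the image of
the idempotent of `L`. -/
lemma isCharacter_part {U : Type} [Group U] [Fintype U] {N H : Subgroup U} {L χ : U → ℂ}
    (D : LinChar N H L) (hχ : IsCharacter U χ) :
    IsCharacter ↥H (fun h => LinChar.part N L χ h) := by
  obtain ⟨m, ρ, hρ⟩ := hχ
  have := Fintype.ofFinite ↥N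
  have h0 : (Nat.card ↥N : ℂ) ≠ 0 := by simp
  let P : Module.End ℂ (Fin m → ℂ) :=
    (Nat.card ↥N : ℂ)⁻¹ • ∑ n : U, (starRingEnd ℂ) (L n) • ρ n
  have hnP : ∀ n ∈ N, ρ n * P = L n • P := fun n hn => by
    simp only [P]
    rw [mul_smul_comm, Finset.mul_sum, smul_comm]
    congr 1
    rw [Finset.smul_sum]
    refine Fintype.sum_equiv (Equiv.mulLeft n) _ _ fun l => ?_
    rw [Equiv.coe_mulLeft, D.mul n hn, mul_smul_comm, ← map_mul, smul_smul,
      map_mul (starRingEnd ℂ), ← mul_assoc, mul_comm (L n), D.conj_mul_self hn, one_mul]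
  have hPP : P * P = P := by
    have : P * P = (Nat.card ↥N : ℂ)⁻¹ • ∑ n : U, (starRingEnd ℂ) (L n) • (ρ n * P) := by
      simp only [← smul_mul_assoc]
      rw [← Finset.sum_mul, ← smul_mul_assoc]
    have h2 : ∀ n : U, (starRingEnd ℂ) (L n) • (ρ n * P) = ((starRingEnd ℂ) (L n) * L n) • P :=
      fun n => by
        by_cases hn : n ∈ N
        · rw [hnP n hn, smul_smul]
        · simp [D.out n hn]
    rw [this]
    simp only [h2]
    rw [← Finset.sum_smul, sum_subgroup N _ fun n hn => by rw [D.out n hn, mul_zero]]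
    simp only [D.conj_mul_self (Subtype.prop _), Finset.sum_const, Finset.card_univ,
      Fintype.card_eq_nat_card, nsmul_eq_mul, mul_one]
    rw [smul_smul, inv_mul_cancel₀ h0, one_smul]
  have hc : ∀ h : ↥H, P * ρ h = ρ h * P := fun h => by
    simp only [P]
    rw [smul_mul_assoc, mul_smul_comm, Finset.mul_sum, Finset.sum_mul]
    congr 1
    refine Fintype.sum_equiv (MulAut.conj (h : U)⁻¹).toEquiv _ _ fun n => ?_
    change _ = ρ h * ((starRingEnd ℂ) (L ((h : U)⁻¹ * n * (h : U)⁻¹⁻¹)) •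
      ρ ((h : U)⁻¹ * n * (h : U)⁻¹⁻¹))
    rw [inv_inv, D.stab h h.2, smul_mul_assoc, mul_smul_comm, ← map_mul, ← map_mul]
    congr 2
    group
  convert isCharacter_of_proj (ρ.comp H.subtype) P hPP hc using 1
  funext h
  change _ = LinearMap.trace ℂ _ (P * ρ h)
  simp only [P]
  rw [smul_mul_assoc, map_smul, Finset.sum_mul, map_sum, LinChar.part, smul_eq_mul]
  congr 1
  refine Finset.sum_congr rfl fun n _ => ?_
  rw [smul_mul_assoc, map_smul, ← map_mul, ← hρ, smul_eq_mul]

/-! ### The reduction -/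

section Reduction

variable {U : Type} [Group U]

/-- A product decomposition of sums over `ZY` when `Z` is central and meets `Y` trivially. -/
lemma sum_sup [Fintype U] {Z Y : Subgroup U} [Fintype ↥Z] [Fintype ↥Y]
    (hZ : Z ≤ Subgroup.center U) (hc : Z ⊓ Y = ⊥) (F : U → ℂ)
    (hF : ∀ g, g ∉ Z ⊔ Y → F g = 0) : ∑ g, F g = ∑ z : ↥Z, ∑ y : ↥Y, F (z * y) := by
  classical
  have hn : Z.Normal := ⟨fun z hz g => by
    rwa [Subgroup.mem_center_iff.1 (hZ hz) g, mul_inv_cancel_right]⟩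
  rw [← Fintype.sum_prod_type']
  refine (Fintype.sum_of_injective (fun p : ↥Z × ↥Y => (p.1 : U) * p.2)
    (Subgroup.mul_injective_of_disjoint (disjoint_iff.2 hc)) _ F (fun g hg => hF g fun h => hg ?_)
    fun p => rfl).symm
  have h' : g ∈ ((Z ⊔ Y : Subgroup U) : Set U) := h
  rw [Subgroup.normal_mul] at h'
  obtain ⟨z, hz, y, hy, rfl⟩ := h'
  exact ⟨⟨⟨z, hz⟩, ⟨y, hy⟩⟩, rfl⟩

lemma mem_sup_central {Z Y : Subgroup U} (hZ : Z ≤ Subgroup.center U) {n : U}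
    (hn : n ∈ Z ⊔ Y) : ∃ z ∈ Z, ∃ y ∈ Y, z * y = n := by
  have hn' : Z.Normal := ⟨fun z hz g => by
    rwa [Subgroup.mem_center_iff.1 (hZ hz) g, mul_inv_cancel_right]⟩
  have h' : n ∈ ((Z ⊔ Y : Subgroup U) : Set U) := hn
  rw [Subgroup.normal_mul] at h'
  exact h'

lemma card_sup [Finite U] {Z Y : Subgroup U}
    (hZ : Z ≤ Subgroup.center U) (hc : Z ⊓ Y = ⊥) :
    Nat.card ↥(Z ⊔ Y) = Nat.card ↥Z * Nat.card ↥Y := by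
  rw [← Nat.card_prod]
  refine (Nat.card_congr (Equiv.ofBijective (fun p : ↥Z × ↥Y =>
    (⟨(p.1 : U) * p.2, Subgroup.mul_mem_sup p.1.2 p.2.2⟩ : ↥(Z ⊔ Y))) ⟨fun p q h => ?_, ?_⟩)).symm
  · exact Subgroup.mul_injective_of_disjoint (disjoint_iff.2 hc) (congrArg Subtype.val h)
  · rintro ⟨n, hn⟩
    obtain ⟨z, hz, y, hy, rfl⟩ := mem_sup_central hZ hn
    exact ⟨⟨⟨z, hz⟩, ⟨y, hy⟩⟩, rfl⟩

end Reduction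

end RL

open RL

/-- Reduction Lemma, part 2.  Under hypotheses (a)–(e) and
additionally (f) `|X| = |Y|`, one has `Irr(U, λ) ∩ Irr(U, 1_Y) = Irr(U, λ)`;
in particular induction `χ ↦ χ^U` is a bijection from `Irr(H/Y, λ)` onto
`Irr(U, λ)`. -/
theorem reduction_lemma_full
    (U : Type) [Group U] [Finite U]
    (H : Subgroup U) (X : Set U)
    -- `X` is a set of representatives for the cosets `U/H`
    (hX : ∀ u : U, ∃! x, x ∈ X ∧ x⁻¹ * u ∈ H)
    (Y Z : Subgroup U) (hYH : Y ≤ H) (hZH : Z ≤ H)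
    (lam : ↥Z → ℂ) (hlam : lam ∈ Irr ↥Z)
    -- (a) `Z ⊆ Z(U)`
    (ha : Z ≤ Subgroup.center U)
    -- (b) `Y ⊴ H`
    (hb : ∀ h ∈ H, ∀ y ∈ Y, h * y * h⁻¹ ∈ Y)
    -- (c) `Z ∩ Y = 1`
    (hc : Z ⊓ Y = ⊥)
    -- (d) `ZY ⊴ U`
    (hd : (Z ⊔ Y).Normal)
    -- `λ̃` is the extension of `λ` to `ZY` with `Y ⊆ Ker λ̃`
    (lamt : ↥(Z ⊔ Y) → ℂ)
    (hlamt_irr : lamt ∈ Irr ↥(Z ⊔ Y))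
    (hlamt_ext : ∀ z : ↥Z, lamt ⟨(z : U), SetLike.le_def.mp le_sup_left z.2⟩ = lam z)
    (hlamt_ker : ∀ y : U, ∀ hy : y ∈ Y,
      lamt ⟨y, SetLike.le_def.mp le_sup_right hy⟩ = lamt 1)
    -- (e) `ˣλ̃ ≠ λ̃` for all `x ∈ X \ H`
    (he : ∀ x ∈ X, x ∉ H → conjChar hd x lamt ≠ lamt)
    -- (f) `|X| = |Y|`
    (hf : Nat.card ↥X = Nat.card ↥Y) :
    IrrOver Z lam ∩ IrrOver Y (fun _ => 1) = IrrOver Z lam ∧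
    Set.BijOn (fun χ : ↥H → ℂ => ind H χ)
      -- `Irr(H/Y, λ)`
      {χ | χ ∈ Irr ↥H ∧
        0 < (innerProd ↥H χ (ind (Z.subgroupOf H)
          (fun z => lam ⟨((z : ↥H) : U), Subgroup.mem_subgroupOf.mp z.2⟩))).re ∧
        ∀ y : U, ∀ hy : y ∈ Y, χ ⟨y, SetLike.le_def.mp hYH hy⟩ = χ 1}
      -- `Irr(U, λ)`
      (IrrOver Z lam) := by
  classical
  have := Fintype.ofFinite U
  have := Fintype.ofFinite ↥Z
  have := Fintype.ofFinite ↥Y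
  -- `λ` is a linear character
  have hl1 : lam 1 = 1 := irr_comm_one hlam fun a b =>
    Subtype.ext (Subgroup.mem_center_iff.1 (ha b.2) a)
  have hlm : ∀ a b, lam (a * b) = lam a * lam b := mul_char hlam.1 hl1
  have hlc : ∀ a, (starRingEnd ℂ) (lam a) = lam a⁻¹ := conj_char hlam.1
  have hlt1 : lamt 1 = 1 := by rw [← hl1, ← hlamt_ext]; rfl
  have hYN : Y ≤ Z ⊔ Y := le_sup_right
  have hZN : Z ≤ Z ⊔ Y := le_sup_left
  have hNH : Z ⊔ Y ≤ H := sup_le hZH hYH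
  have hLY : ∀ y ∈ Y, ext0 (Z ⊔ Y) lamt y = 1 := fun y hy => by
    rw [ext0_mem _ (hYN hy), hlamt_ker y hy, hlt1]
  have hLZ : ∀ z : ↥Z, ext0 (Z ⊔ Y) lamt z = lam z := fun z => by
    rw [ext0_mem _ (hZN z.2), hlamt_ext]
  have hcent : ∀ z ∈ Z, ∀ u : U, u⁻¹ * z * u = z := fun z hz u => by
    rw [mul_assoc, ← Subgroup.mem_center_iff.1 (ha hz) u, inv_mul_cancel_left]
  have hLm : ∀ n ∈ Z ⊔ Y, ∀ m, ext0 (Z ⊔ Y) lamt (n * m) =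
      ext0 (Z ⊔ Y) lamt n * ext0 (Z ⊔ Y) lamt m := fun n hn m => by
    by_cases hm : m ∈ Z ⊔ Y
    · rw [ext0_mem _ hn, ext0_mem _ hm, ext0_mem _ (mul_mem hn hm),
        ← mul_char hlamt_irr.1 hlt1]
      rfl
    · rw [ext0_not_mem _ hm, ext0_not_mem, mul_zero]
      exact fun h => hm ((Subgroup.mul_mem_cancel_left _ hn).1 h)
  have hstab : ∀ h ∈ H, ∀ n, ext0 (Z ⊔ Y) lamt (h⁻¹ * n * h) = ext0 (Z ⊔ Y) lamt n := by
    intro h hh n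
    by_cases hn : n ∈ Z ⊔ Y
    · obtain ⟨z, hz, y, hy, rfl⟩ := mem_sup_central ha hn
      have hy' : h⁻¹ * y * h ∈ Y := by simpa using hb h⁻¹ (H.inv_mem hh) y hy
      rw [show h⁻¹ * (z * y) * h = (h⁻¹ * z * h) * (h⁻¹ * y * h) by group, hcent z hz,
        hLm z (hZN hz), hLm z (hZN hz), hLY _ hy', hLY _ hy]
    · rw [ext0_not_mem _ hn, ext0_not_mem]
      intro h'
      apply hn
      have := hd.conj_mem _ h' h
      rwa [show h * (h⁻¹ * n * h) * h⁻¹ = n by group] at this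
  have D : LinChar (Z ⊔ Y) H (ext0 (Z ⊔ Y) lamt) :=
    { normal := hd
      le := hNH
      one := hLY 1 Y.one_mem
      out := fun n hn => ext0_not_mem _ hn
      mul := hLm
      conj := fun n => by
        by_cases hn : n ∈ Z ⊔ Y
        · rw [ext0_mem _ hn, ext0_mem _ (inv_mem hn), conj_char hlamt_irr.1]
          rfl
        · rw [ext0_not_mem _ hn, ext0_not_mem, map_zero]
          exact fun h => hn (inv_mem_iff.1 h)
      stab := hstab
      ne := fun u hu => by
        obtain ⟨x, ⟨hxX, hxu⟩, -⟩ := hX u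
        have hxH : x ∉ H := fun h => hu (by simpa using H.mul_mem h hxu)
        obtain ⟨n, hn⟩ := Function.ne_iff.1 (he x hxX hxH)
        refine ⟨n, n.2, fun h => hn ?_⟩
        rw [← hstab _ (H.inv_mem hxu),
          show (x⁻¹ * u)⁻¹⁻¹ * (u⁻¹ * n * u) * (x⁻¹ * u)⁻¹ = x⁻¹ * n * x by group,
          ext0_mem _ n.2, ext0_mem _ (by simpa using hd.conj_mem n n.2 x⁻¹)] at h
        exact h }
  have hcard : Nat.card U * Nat.card ↥Z = Nat.card ↥H * Nat.card ↥(Z ⊔ Y) := by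
    have hcompl : Subgroup.IsComplement X (H : Set U) := by
      rw [Subgroup.isComplement_iff_existsUnique_inv_mul_mem]
      intro g
      obtain ⟨x, ⟨hx, hxg⟩, huniq⟩ := hX g
      exact ⟨⟨x, hx⟩, hxg, fun x' hx' => Subtype.ext (huniq x' ⟨x'.2, hx'⟩)⟩
    have h1 : Nat.card ↥X * Nat.card ↥H = Nat.card U := hcompl.card_mul_card
    rw [card_sup ha hc, ← h1, hf]
    ring
  have hindU : ∀ ψ : ↥H → ℂ, ind H ψ = indU H (ext0 H ψ) := fun ψ =>
    funext fun g => ind_eq_sum H ψ g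
  -- both `Irr(U, λ)` and `Irr(H/Y, λ)` in terms of the action of `Z`
  have hoverU : ∀ χ ∈ Irr U, (0 < (innerProd U χ (ind Z lam)).re ↔
      ∀ (z : ↥Z) g, χ (z * g) = lam z * χ g) := fun χ hχ =>
    over_iff hχ Z ha lam hl1 hlm hlc
  have hoverH : ∀ ψ ∈ Irr ↥H, (0 < (innerProd ↥H ψ (ind (Z.subgroupOf H)
      (fun z => lam ⟨((z : ↥H) : U), Subgroup.mem_subgroupOf.mp z.2⟩))).re ↔
      ∀ (z : ↥(Z.subgroupOf H)) g, ψ (z * g) =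
        lam ⟨((z : ↥H) : U), Subgroup.mem_subgroupOf.mp z.2⟩ * ψ g) := fun ψ hψ => by
    refine over_iff hψ (Z.subgroupOf H) (fun z hz => ?_) _ hl1 (fun a b => ?_) (fun a => ?_)
    · exact Subgroup.mem_center_iff.2 fun g =>
        Subtype.ext (Subgroup.mem_center_iff.1 (ha (Subgroup.mem_subgroupOf.1 hz)) g)
    · rw [← hlm]
      rfl
    · rw [hlc]
      rfl
  have hsemi : ∀ ψ ∈ {χ | χ ∈ Irr ↥H ∧
        0 < (innerProd ↥H χ (ind (Z.subgroupOf H)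
          (fun z => lam ⟨((z : ↥H) : U), Subgroup.mem_subgroupOf.mp z.2⟩))).re ∧
        ∀ y : U, ∀ hy : y ∈ Y, χ ⟨y, SetLike.le_def.mp hYH hy⟩ = χ 1},
      Semi (Z ⊔ Y) H (ext0 (Z ⊔ Y) lamt) (ext0 H ψ) := by
    rintro ψ ⟨hψ, hover, hker⟩
    rw [hoverH ψ hψ] at hover
    refine ⟨fun g hg => ext0_not_mem _ hg, fun n hn g => ?_, fun h hh g => ?_⟩
    · by_cases hg : g ∈ H
      · obtain ⟨z, hz, y, hy, rfl⟩ := mem_sup_central ha hn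
        have h1 := hover ⟨⟨z, hZH hz⟩, hz⟩ (⟨y, hYH hy⟩ * ⟨g, hg⟩)
        have h2 := kernel_mul hψ.1 (Y.subgroupOf H) (fun y hy => hker y hy)
          (y := ⟨y, hYH hy⟩) hy ⟨g, hg⟩
        rw [h2] at h1
        rw [hLm z (hZN hz), hLY y hy, mul_one, hLZ ⟨z, hz⟩, ext0_mem _ hg,
          ext0_mem _ (H.mul_mem (hNH hn) hg), ← h1]
        congr 1
        exact Subtype.ext (mul_assoc z y g)
      · rw [ext0_not_mem _ hg, ext0_not_mem, mul_zero]
        exact fun h => hg ((H.mul_mem_cancel_left (hNH hn)).1 h)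
    · by_cases hg : g ∈ H
      · rw [ext0_mem _ hg, ext0_mem _ (H.mul_mem (H.mul_mem (H.inv_mem hh) hg) hh)]
        exact class_fun hψ.1 ⟨g, hg⟩ ⟨h, hh⟩
      · rw [ext0_not_mem _ hg, ext0_not_mem]
        intro h'
        exact hg ((H.mul_mem_cancel_left (H.inv_mem hh)).1 ((H.mul_mem_cancel_right hh).1 h'))
  -- the preimage of `χ ∈ Irr(U, λ)` is its `λ̃`-isotypic part
  have hsurj : ∀ χ ∈ IrrOver Z lam,
      ((fun h : ↥H => LinChar.part (Z ⊔ Y) (ext0 (Z ⊔ Y) lamt) χ h) ∈ {χ | χ ∈ Irr ↥H ∧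
        0 < (innerProd ↥H χ (ind (Z.subgroupOf H)
          (fun z => lam ⟨((z : ↥H) : U), Subgroup.mem_subgroupOf.mp z.2⟩))).re ∧
        ∀ y : U, ∀ hy : y ∈ Y, χ ⟨y, SetLike.le_def.mp hYH hy⟩ = χ 1}) ∧
      ind H (fun h : ↥H => LinChar.part (Z ⊔ Y) (ext0 (Z ⊔ Y) lamt) χ h) = χ := by
    rintro χ ⟨hχ, hover⟩
    rw [hoverU χ hχ] at hover
    set T := LinChar.part (Z ⊔ Y) (ext0 (Z ⊔ Y) lamt) χ with hT
    have hS : Semi (Z ⊔ Y) H (ext0 (Z ⊔ Y) lamt) T := D.semi_part (class_fun hχ.1)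
    have hext : ext0 H (fun h : ↥H => T h) = T := funext fun g => by
      by_cases hg : g ∈ H
      · rw [ext0_mem _ hg]
      · rw [ext0_not_mem _ hg, hS.out g hg]
    have hindT : indU H T = χ := D.indU_part hZN ha hcard (class_fun hχ.1)
      fun z hz g => by rw [hover ⟨z, hz⟩, ← hLZ]
    have hirr : (fun h : ↥H => T h) ∈ Irr ↥H := by
      refine ⟨isCharacter_part D hχ.1, ?_⟩
      rw [innerProd_ext0, hext, ← D.norm_indU hS, hindT, ← innerProd_eq_sum, hχ.2]
    refine ⟨⟨hirr, (hoverH _ hirr).2 fun z g => ?_, fun y hy => ?_⟩, ?_⟩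
    · have hz : ((z : ↥H) : U) ∈ Z := Subgroup.mem_subgroupOf.mp z.2
      rw [← hLZ]
      exact hS.mul _ (hZN hz) g
    · have := hS.mul y (hYN hy) 1
      rwa [hLY y hy, one_mul, mul_one] at this
    · rw [hindU, hext, hindT]
  refine ⟨Set.inter_eq_left.2 fun χ hχ => ?_, fun ψ hψ => ?_, fun ψ hψ ψ' hψ' heq => ?_,
    fun χ hχ => ⟨_, hsurj χ hχ⟩⟩
  · -- the multiplicity of `1_Y` in `χ` is the degree of the `λ̃`-isotypic part
    refine ⟨hχ.1, ?_⟩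
    have hpos := irr_one_pos (hsurj χ hχ).1.1
    have hover := (hoverU χ hχ.1).1 hχ.2
    have hY0 : (Nat.card ↥Y : ℂ) ≠ 0 := by simp
    have hZ0 : (Nat.card ↥Z : ℂ) ≠ 0 := by simp
    have h1 : innerProd U χ (ind Y fun _ => 1) = LinChar.part (Z ⊔ Y) (ext0 (Z ⊔ Y) lamt) χ 1 := by
      rw [frobenius Y _ χ (class_fun hχ.1.1),
        sum_subgroup Y _ fun g hg => by rw [ext0_not_mem _ hg, map_zero, mul_zero]]
      simp only [ext0_mem _ (Subtype.prop _), map_one, mul_one]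
      rw [LinChar.part, sum_sup ha hc _ fun g hg => by rw [D.out g hg, map_zero, zero_mul],
        card_sup ha hc]
      have : ∀ (z : ↥Z) (y : ↥Y), (starRingEnd ℂ) (ext0 (Z ⊔ Y) lamt (z * y)) *
          χ (z * y * 1) = χ y := fun z y => by
        rw [mul_one, hover, hLm z (hZN z.2), hLY y y.2, mul_one, ← hLZ, ← mul_assoc,
          D.conj_mul_self (hZN z.2), one_mul]
      simp only [this, Finset.sum_const, Finset.card_univ, nsmul_eq_mul,
        Fintype.card_eq_nat_card]
      push_cast
      field_simp
    rw [h1]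
    exact hpos
  · have hS := hsemi ψ hψ
    have hirr : ind H ψ ∈ Irr U := by
      refine ⟨isCharacter_ind H hψ.1.1, ?_⟩
      rw [hindU, innerProd_eq_sum, D.norm_indU hS, ← innerProd_ext0, hψ.1.2]
    refine ⟨hirr, (hoverU _ hirr).2 fun z g => ?_⟩
    rw [hindU, indU, indU, mul_left_comm]
    congr 1
    rw [Finset.mul_sum]
    refine Finset.sum_congr rfl fun u _ => ?_
    rw [show u⁻¹ * (z * g) * u = (u⁻¹ * z * u) * (u⁻¹ * g * u) by group, hcent z z.2,
      hS.mul z (hZN z.2), hLZ]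
  · funext h
    have h1 := D.recover (hsemi ψ hψ) h
    have h2 := D.recover (hsemi ψ' hψ') h
    have heq' : ind H ψ = ind H ψ' := heq
    rw [← hindU, heq', hindU, h2, ext0_mem _ h.2, ext0_mem _ h.2] at h1
    exact h1.symm
end
end

section
/- Let U be a finite group, H a subgroup of U, and X a set of representatives for the cosets U/H. Let Y and Z be subgroups of H and λ ∈ Irr(Z) such that: (a) Z ⊆ Z(U); (b) Y is normal in H; (c) Z ∩ Y = {1}; (d) ZY is normal in U; (e) for the unique extension λ̃ ∈ Irr(ZY) of λ with Y ⊆ Ker(λ̃) one has ˣλ̃ ≠ λ̃ for all x ∈ X ∖ H; and (f) |X| = |Y|. Then λ has exactly |Y| distinct extensions to ZY = Z × Y, the conjugation action of U permutes these extensions transitively, and every μ ∈ Irr(ZY) whose restriction to Z equals λ is U-conjugate to λ̃. -/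
/-!
A central subgroup `Z` is abelian, so `λ` has degree one: for an abelian group the self inner
product of the character of an `m`-dimensional representation is the dimension of the commuting
algebra, and if this algebra is one-dimensional then every operator is scalar and `m = 1`
(`CT.Irr.apply_one`). To read the inner product as such a dimension one needs `χ(g⁻¹)` to be the
complex conjugate of `χ(g)`, which holds since `ρ(g)` is diagonalizable with roots of unity as
eigenvalues (`CT.trace_inverse_eq_conj`).

Hence every extension `μ` of `λ` to `ZY` has degree one, is a homomorphism to `ℂ`
(`CT.IsCharacter.exists_monoidHom`), and is determined by its restriction to `Y`. By Dedekind's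
linear independence of characters there are at most `|Y|` extensions. Conversely `H` stabilizes
`λ̃`, because `Z` is central, `Y` is normal in `H`, and `λ̃` is trivial on `Y`; hypothesis (e) then
says that the stabilizer of `λ̃` is exactly `H`, so the conjugates `ˣλ̃`, `x ∈ X`, are
`|X| = |Y|` distinct extensions. They are therefore all of them, which gives every claim.
-/


/-!
Reduction Lemma (Lemma `nred`, part 1) from "On the characters of the Sylow
p-subgroups of untwisted Chevalley groups".

We develop the needed character-theoretic notions concretely: a character of a
finite group `G` is the trace function of some finite-dimensional complex
representation; it is irreducible if moreover its self inner product is `1`.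
Induction of characters, kernels, conjugate characters and the sets
`Irr(G, λ)` are defined by the standard formulas.
-/

noncomputable section

open CT

namespace CT

/-! ### Characters of degree one -/

/-- The inverse of an operator of finite order has the complex conjugate trace, as the
eigenvalues are roots of unity and the operator is diagonalizable. -/
theorem trace_inverse_eq_conj {V : Type*} [AddCommGroup V] [Module ℂ V] [FiniteDimensional ℂ V]
    (f g : Module.End ℂ V) (hgf : g * f = 1) {n : ℕ} (hn : n ≠ 0) (hfn : f ^ n = 1) :
    LinearMap.trace ℂ V g = (starRingEnd ℂ) (LinearMap.trace ℂ V f) := by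
  have hss : f.IsSemisimple := by
    refine Module.End.isSemisimple_of_squarefree_aeval_eq_zero (p := Polynomial.X ^ n - 1) ?_ ?_
    · exact (Polynomial.X_pow_sub_one_separable_iff.2 (by exact_mod_cast hn)).squarefree
    · simp [hfn]
  have hint : DirectSum.IsInternal f.eigenspace := by
    classical
    exact DirectSum.isInternal_submodule_of_iSupIndep_of_iSup_eq_top f.eigenspaces_iSupIndep
      hss.iSup_eigenspace_eq_top
  have hfin : {μ | f.eigenspace μ ≠ ⊥}.Finite :=
    WellFoundedGT.finite_ne_bot_of_iSupIndep f.eigenspaces_iSupIndep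
  have hroot : ∀ μ : ℂ, ∀ v ∈ f.eigenspace μ, v ≠ 0 → μ ^ n = 1 := by
    intro μ v hv hv0
    have h := ((Module.End.hasEigenvector_iff.2 ⟨hv, hv0⟩).pow_apply n)
    rw [hfn, Module.End.one_apply] at h
    have h2 : (μ ^ n - 1) • v = 0 := by rw [sub_smul, ← h, one_smul, sub_self]
    exact sub_eq_zero.1 ((smul_eq_zero.1 h2).resolve_right hv0)
  have hgv : ∀ μ : ℂ, ∀ v ∈ f.eigenspace μ, g v = μ⁻¹ • v := by
    intro μ v hv
    by_cases hv0 : v = 0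
    · simp [hv0]
    have hμ0 : μ ≠ 0 := by
      rintro rfl
      simpa [hn] using hroot 0 v hv hv0
    have h1 : g (f v) = v := by rw [← Module.End.mul_apply, hgf, Module.End.one_apply]
    rw [Module.End.mem_eigenspace_iff.1 hv, map_smul] at h1
    rw [← h1, smul_smul, inv_mul_cancel₀ hμ0, one_smul, h1]
  have hmf : ∀ μ, Set.MapsTo f (f.eigenspace μ) (f.eigenspace μ) := fun μ v hv => by
    rw [SetLike.mem_coe] at hv ⊢
    rw [Module.End.mem_eigenspace_iff.1 hv]
    exact Submodule.smul_mem _ _ hv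
  have hmg : ∀ μ, Set.MapsTo g (f.eigenspace μ) (f.eigenspace μ) := fun μ v hv => by
    rw [SetLike.mem_coe] at hv ⊢
    rw [hgv μ v hv]
    exact Submodule.smul_mem _ _ hv
  rw [LinearMap.trace_eq_sum_trace_restrict' hint hfin hmf,
    LinearMap.trace_eq_sum_trace_restrict' hint hfin hmg, map_sum]
  refine Finset.sum_congr rfl fun μ hμ => ?_
  have hrf : f.restrict (hmf μ) = μ • LinearMap.id := by
    exact LinearMap.ext fun v => Subtype.ext (Module.End.mem_eigenspace_iff.1 v.2)
  have hrg : g.restrict (hmg μ) = μ⁻¹ • LinearMap.id := by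
    exact LinearMap.ext fun v => Subtype.ext (hgv μ v v.2)
  obtain ⟨v, hv, hv0⟩ := (Submodule.ne_bot_iff _).1 (hfin.mem_toFinset.1 hμ)
  have hnorm : ‖μ‖ = 1 := Complex.norm_eq_one_of_pow_eq_one (hroot μ v hv hv0) hn
  rw [hrf, hrg, map_smul, map_smul, LinearMap.trace_id, smul_eq_mul, smul_eq_mul, map_mul,
    Complex.inv_eq_conj hnorm, Complex.conj_natCast]

/-- Irreducible characters of finite abelian groups have degree one. -/
theorem Irr.apply_one {G : Type} [Group G] [Finite G] (hG : ∀ a b : G, a * b = b * a)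
    {χ : G → ℂ} (hχ : χ ∈ Irr G) : χ 1 = 1 := by
  obtain ⟨⟨m, ρ, hρ⟩, hnorm⟩ := hχ
  have := Fintype.ofFinite G
  have hcard : (Nat.card G : ℂ) ≠ 0 := by exact_mod_cast Nat.card_pos.ne'
  have : Invertible (Nat.card G : ℂ) := invertibleOfNonzero hcard
  have hconj : ∀ g, (starRingEnd ℂ) (χ g) = ρ.character g⁻¹ := by
    intro g
    rw [hρ]
    refine (trace_inverse_eq_conj (ρ g) (ρ g⁻¹) ?_ (orderOf_pos g).ne' ?_).symm
    · rw [← map_mul, inv_mul_cancel, map_one]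
    · rw [← map_pow, pow_orderOf_eq_one, map_one]
  have hrank : Module.finrank ℂ (Representation.IntertwiningMap ρ ρ) = 1 := by
    have h := Representation.card_inv_mul_sum_char_mul_char_eq_finrank (ρ := ρ) (σ := ρ)
    rw [innerProd, finsum_eq_sum_of_fintype] at hnorm
    have h2 : ∑ g, χ g * (starRingEnd ℂ) (χ g) = ∑ g, ρ.character g * ρ.character g⁻¹ :=
      Finset.sum_congr rfl fun g _ => by rw [hconj, hρ]; rfl
    rw [h2, h] at hnorm
    exact_mod_cast hnorm
  have hid := (finrank_eq_one_iff_of_nonzero' (1 : Representation.IntertwiningMap ρ ρ) (by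
    intro h0
    -- if the identity vanishes, the space of intertwining maps is zero
    have : Subsingleton (Representation.IntertwiningMap ρ ρ) :=
      ⟨fun a b => Representation.IntertwiningMap.ext (LinearMap.ext fun v => by
        have hv : v = 0 := congrArg (fun F : Representation.IntertwiningMap ρ ρ => F v) h0
        rw [hv, map_zero, map_zero])⟩
    rw [Module.finrank_zero_of_subsingleton] at hrank
    exact zero_ne_one hrank)).1 hrank
  -- each `ρ g` is an intertwining map since `G` is abelian
  have hscal : ∀ g, ∃ c : ℂ, ∀ v, ρ g v = c • v := by
    intro g
    obtain ⟨c, hc⟩ := hid ⟨ρ g, fun h => by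
      rw [← Module.End.mul_eq_comp, ← Module.End.mul_eq_comp, ← map_mul, ← map_mul, hG]⟩
    exact ⟨c, fun v => (congrArg (fun F : Representation.IntertwiningMap ρ ρ => F v) hc).symm⟩
  -- hence every operator is an intertwining map, and so a scalar
  have hall : ∀ f : Module.End ℂ (Fin m → ℂ), ∃ c : ℂ, c • (1 : Module.End ℂ (Fin m → ℂ)) = f := by
    intro f
    obtain ⟨c, hc⟩ := hid ⟨f, fun h => by
      obtain ⟨d, hd⟩ := hscal h
      exact LinearMap.ext fun v => by simp [hd]⟩
    exact ⟨c, LinearMap.ext fun v =>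
      congrArg (fun F : Representation.IntertwiningMap ρ ρ => F v) hc⟩
  have hm : m ≤ 1 := by
    have hle : Module.finrank ℂ (Module.End ℂ (Fin m → ℂ)) ≤ 1 := finrank_le_one 1 hall
    rw [Module.finrank_linearMap, Module.finrank_fin_fun] at hle
    nlinarith
  have hm0 : m ≠ 0 := by
    rintro rfl
    have : Subsingleton (Representation.IntertwiningMap ρ ρ) :=
      ⟨fun a b => by ext1; exact Subsingleton.elim _ _⟩
    rw [Module.finrank_zero_of_subsingleton] at hrank
    exact zero_ne_one hrank
  rw [hρ, map_one, LinearMap.trace_one, Module.finrank_fin_fun]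
  exact_mod_cast (by omega : m = 1)

/-- A character of degree one is a homomorphism. -/
theorem IsCharacter.exists_monoidHom {G : Type} [Group G] {χ : G → ℂ} (hχ : IsCharacter G χ)
    (h1 : χ 1 = 1) : ∃ φ : G →* ℂ, ∀ g, χ g = φ g := by
  obtain ⟨m, ρ, hρ⟩ := hχ
  have hm : Module.finrank ℂ (Fin m → ℂ) = 1 := by
    rw [hρ, map_one, LinearMap.trace_one] at h1
    exact_mod_cast h1
  refine ⟨⟨⟨χ, h1⟩, fun a b => ?_⟩, fun g => rfl⟩
  obtain ⟨c, hc, -⟩ := LinearMap.existsUnique_eq_smul_id_of_finrank_eq_one hm (ρ a)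
  change χ (a * b) = χ a * χ b
  rw [hρ, hρ, hρ, map_mul, hc, Module.End.mul_eq_comp, LinearMap.smul_comp, LinearMap.id_comp,
    map_smul, map_smul, LinearMap.trace_id, hm]
  simp

/-- Dedekind: a finite group has at most as many homomorphisms to `ℂ` as it has elements. -/
theorem finite_and_card_monoidHom_le (G : Type) [Group G] [Finite G] :
    Finite (G →* ℂ) ∧ Nat.card (G →* ℂ) ≤ Nat.card G := by
  have := Fintype.ofFinite G
  have hli := linearIndependent_monoidHom G ℂ
  have : Finite (G →* ℂ) := hli.finite
  have := Fintype.ofFinite (G →* ℂ)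
  refine ⟨inferInstance, ?_⟩
  simpa [Nat.card_eq_fintype_card] using hli.fintype_card_le_finrank

/-! ### Conjugation of characters -/

theorem IsCharacter.conjChar {U : Type} [Group U] {N : Subgroup U} (hN : N.Normal) (x : U)
    {μ : ↥N → ℂ} (hμ : IsCharacter ↥N μ) : IsCharacter ↥N (CT.conjChar hN x μ) := by
  obtain ⟨m, ρ, hρ⟩ := hμ
  refine ⟨m, ρ.comp (MulAut.conjNormal x⁻¹ : ↥N ≃* ↥N).toMonoidHom, fun g => ?_⟩
  rw [CT.conjChar, hρ]
  exact congrArg (fun n => LinearMap.trace ℂ (Fin m → ℂ) (ρ n)) (Subtype.ext (by simp))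

theorem conjChar_conjChar {U : Type} [Group U] {N : Subgroup U} (hN : N.Normal) (a b : U)
    (μ : ↥N → ℂ) : conjChar hN a (conjChar hN b μ) = conjChar hN (a * b) μ := by
  funext n
  exact congrArg μ (Subtype.ext (by simp [mul_assoc]))

theorem conjChar_one {U : Type} [Group U] {N : Subgroup U} (hN : N.Normal)
    (μ : ↥N → ℂ) : conjChar hN 1 μ = μ := by
  funext n
  exact congrArg μ (Subtype.ext (by simp))

end CT

/-- Under hypotheses (a)–(f): `λ` has exactly `|Y|` distinct
extensions to `ZY = Z × Y` (an extension being a character of `ZY` restricting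
to `λ` on `Z`), the conjugation action of `U` permutes these extensions
transitively, and every irreducible character `μ` of `ZY` restricting to `λ`
on `Z` is `U`-conjugate to `λ̃`. -/
theorem extensions_card_and_transitive
    (U : Type) [Group U] [Finite U]
    (H : Subgroup U) (X : Set U)
    -- `X` is a set of representatives for the cosets `U/H`
    (hX : ∀ u : U, ∃! x, x ∈ X ∧ x⁻¹ * u ∈ H)
    (Y Z : Subgroup U) (hYH : Y ≤ H) (hZH : Z ≤ H)
    (lam : ↥Z → ℂ) (hlam : lam ∈ Irr ↥Z)
    -- (a) `Z ⊆ Z(U)`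
    (ha : Z ≤ Subgroup.center U)
    -- (b) `Y ⊴ H`
    (hb : ∀ h ∈ H, ∀ y ∈ Y, h * y * h⁻¹ ∈ Y)
    -- (c) `Z ∩ Y = 1`
    (hc : Z ⊓ Y = ⊥)
    -- (d) `ZY ⊴ U`
    (hd : (Z ⊔ Y).Normal)
    -- `λ̃` is the extension of `λ` to `ZY` with `Y ⊆ Ker λ̃`
    (lamt : ↥(Z ⊔ Y) → ℂ)
    (hlamt_irr : lamt ∈ Irr ↥(Z ⊔ Y))
    (hlamt_ext : ∀ z : ↥Z, lamt ⟨(z : U), SetLike.le_def.mp le_sup_left z.2⟩ = lam z)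
    (hlamt_ker : ∀ y : U, ∀ hy : y ∈ Y,
      lamt ⟨y, SetLike.le_def.mp le_sup_right hy⟩ = lamt 1)
    -- (e) `ˣλ̃ ≠ λ̃` for all `x ∈ X \ H`
    (he : ∀ x ∈ X, x ∉ H → conjChar hd x lamt ≠ lamt)
    -- (f) `|X| = |Y|`
    (hf : Nat.card ↥X = Nat.card ↥Y) :
    -- exactly `|Y|` extensions of `λ` to `ZY`
    Nat.card ↥{μ : ↥(Z ⊔ Y) → ℂ | IsCharacter ↥(Z ⊔ Y) μ ∧
        ∀ z : ↥Z, μ ⟨(z : U), SetLike.le_def.mp le_sup_left z.2⟩ = lam z} =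
      Nat.card ↥Y ∧
    -- `U` permutes the extensions by conjugation …
    (∀ u : U, ∀ μ : ↥(Z ⊔ Y) → ℂ, IsCharacter ↥(Z ⊔ Y) μ →
      (∀ z : ↥Z, μ ⟨(z : U), SetLike.le_def.mp le_sup_left z.2⟩ = lam z) →
      IsCharacter ↥(Z ⊔ Y) (conjChar hd u μ) ∧
        ∀ z : ↥Z, conjChar hd u μ ⟨(z : U), SetLike.le_def.mp le_sup_left z.2⟩ = lam z) ∧
    -- … transitively
    (∀ μ₁ μ₂ : ↥(Z ⊔ Y) → ℂ,
      IsCharacter ↥(Z ⊔ Y) μ₁ →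
      (∀ z : ↥Z, μ₁ ⟨(z : U), SetLike.le_def.mp le_sup_left z.2⟩ = lam z) →
      IsCharacter ↥(Z ⊔ Y) μ₂ →
      (∀ z : ↥Z, μ₂ ⟨(z : U), SetLike.le_def.mp le_sup_left z.2⟩ = lam z) →
      ∃ u : U, conjChar hd u μ₁ = μ₂) ∧
    -- every `μ ∈ Irr(ZY)` with `μ|_Z = λ` is `U`-conjugate to `λ̃`
    (∀ μ : ↥(Z ⊔ Y) → ℂ, μ ∈ Irr ↥(Z ⊔ Y) →
      (∀ z : ↥Z, μ ⟨(z : U), SetLike.le_def.mp le_sup_left z.2⟩ = lam z) →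
      ∃ u : U, conjChar hd u lamt = μ) := by
  have hcomm : ∀ z ∈ Z, ∀ u : U, u * z = z * u := fun z hz u =>
    Subgroup.mem_center_iff.1 (ha hz) u
  have hlam1 : lam 1 = 1 :=
    Irr.apply_one (fun a b => Subtype.ext (hcomm b b.2 a)) hlam
  have hZn : Z.Normal := ⟨fun z hz g => by rw [hcomm z hz g, mul_inv_cancel_right]; exact hz⟩
  -- an extension is multiplicative, as it has degree `λ(1) = 1`
  have hhom : ∀ μ : ↥(Z ⊔ Y) → ℂ, IsCharacter ↥(Z ⊔ Y) μ →
      (∀ z : ↥Z, μ ⟨(z : U), SetLike.le_def.mp le_sup_left z.2⟩ = lam z) →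
      ∃ φ : ↥(Z ⊔ Y) →* ℂ, ∀ g, μ g = φ g := by
    intro μ hμ hμZ
    exact hμ.exists_monoidHom ((hμZ 1).trans hlam1)
  have hdecomp : ∀ n : ↥(Z ⊔ Y), ∃ (z : ↥Z) (y : ↥Y),
      n = (⟨(z : U), SetLike.le_def.mp le_sup_left z.2⟩ : ↥(Z ⊔ Y)) *
        ⟨(y : U), SetLike.le_def.mp le_sup_right y.2⟩ := by
    rintro ⟨n, hn⟩
    obtain ⟨z, hz, y, hy, rfl⟩ := Subgroup.mem_sup_of_normal_left.1 hn
    exact ⟨⟨z, hz⟩, ⟨y, hy⟩, rfl⟩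
  have hperm : ∀ u : U, ∀ μ : ↥(Z ⊔ Y) → ℂ, IsCharacter ↥(Z ⊔ Y) μ →
      (∀ z : ↥Z, μ ⟨(z : U), SetLike.le_def.mp le_sup_left z.2⟩ = lam z) →
      IsCharacter ↥(Z ⊔ Y) (conjChar hd u μ) ∧
        ∀ z : ↥Z, conjChar hd u μ ⟨(z : U), SetLike.le_def.mp le_sup_left z.2⟩ = lam z := by
    intro u μ hμ hμZ
    refine ⟨hμ.conjChar hd u, fun z => ?_⟩
    rw [← hμZ z]
    refine congrArg μ (Subtype.ext ?_)
    change u⁻¹ * (z : U) * u = z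
    rw [mul_assoc, ← hcomm z z.2 u, inv_mul_cancel_left]
  obtain ⟨φ, hφ⟩ := hhom lamt hlamt_irr.1 hlamt_ext
  have hφY : ∀ y : ↥Y, φ ⟨(y : U), SetLike.le_def.mp le_sup_right y.2⟩ = 1 := fun y => by
    rw [← hφ, hlamt_ker y y.2, hφ, map_one]
  -- `H` stabilizes `λ̃`
  have hstab : ∀ h ∈ H, conjChar hd h lamt = lamt := by
    intro h hh
    funext n
    obtain ⟨z, y, rfl⟩ := hdecomp n
    have hy' : h⁻¹ * (y : U) * h ∈ Y := by
      simpa using hb h⁻¹ (H.inv_mem hh) y y.2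
    have key : lamt ((⟨(z : U), SetLike.le_def.mp le_sup_left z.2⟩ : ↥(Z ⊔ Y)) *
        ⟨h⁻¹ * (y : U) * h, SetLike.le_def.mp le_sup_right hy'⟩) =
        lamt ((⟨(z : U), SetLike.le_def.mp le_sup_left z.2⟩ : ↥(Z ⊔ Y)) *
        ⟨(y : U), SetLike.le_def.mp le_sup_right y.2⟩) := by
      rw [hφ, hφ, map_mul, map_mul, hφY y, hφY ⟨_, hy'⟩]
    rw [← key]
    refine congrArg lamt (Subtype.ext ?_)
    change h⁻¹ * ((z : U) * y) * h = z * (h⁻¹ * y * h)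
    rw [← mul_assoc, hcomm z z.2 h⁻¹]
    simp only [mul_assoc]
  set E : Set (↥(Z ⊔ Y) → ℂ) := {μ | IsCharacter ↥(Z ⊔ Y) μ ∧
        ∀ z : ↥Z, μ ⟨(z : U), SetLike.le_def.mp le_sup_left z.2⟩ = lam z} with hE
  let F : ↥X → ↥E := fun x => ⟨conjChar hd x lamt, hperm x lamt hlamt_irr.1 hlamt_ext⟩
  have hF : Function.Injective F := by
    intro x x' hxx
    have h1 : conjChar hd (x : U) lamt = conjChar hd (x' : U) lamt := congrArg Subtype.val hxx
    have h2 : conjChar hd ((x : U)⁻¹ * x') lamt = lamt := by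
      rw [← conjChar_conjChar, ← h1, conjChar_conjChar, inv_mul_cancel, conjChar_one]
    -- `w` represents the coset of `x⁻¹ x'`, and stabilizes `λ̃` as `x⁻¹ x'` and `H` do
    obtain ⟨w, ⟨hwX, hwH⟩, -⟩ := hX ((x : U)⁻¹ * x')
    have h3 : conjChar hd w lamt = lamt := by
      conv_lhs => rw [← hstab _ hwH, conjChar_conjChar, mul_inv_cancel_left]
      exact h2
    have hw : w ∈ H := by
      by_contra hw
      exact he w hwX hw h3
    have h4 : (x : U)⁻¹ * x' ∈ H := by
      simpa using H.mul_mem hw hwH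
    obtain ⟨v, -, hv⟩ := hX (x' : U)
    exact Subtype.ext ((hv x ⟨x.2, h4⟩).trans (hv x' ⟨x'.2, by simp⟩).symm)
  -- an extension is determined by its restriction to `Y`
  choose Φ hΦ using fun μ : ↥E => hhom μ.1 μ.2.1 μ.2.2
  let R : ↥E → (↥Y →* ℂ) := fun μ => (Φ μ).comp (Subgroup.inclusion le_sup_right)
  have hR : Function.Injective R := by
    intro μ ν hμν
    refine Subtype.ext (funext fun n => ?_)
    obtain ⟨z, y, rfl⟩ := hdecomp n
    have hy : Φ μ ⟨(y : U), SetLike.le_def.mp le_sup_right y.2⟩ =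
      Φ ν ⟨(y : U), SetLike.le_def.mp le_sup_right y.2⟩ := DFunLike.congr_fun hμν y
    rw [hΦ, hΦ, map_mul, map_mul, hy, ← hΦ μ, ← hΦ ν ⟨(z : U), _⟩, μ.2.2 z, ν.2.2 z]
  obtain ⟨hfin, hle⟩ := finite_and_card_monoidHom_le ↥Y
  have hfinE : Finite ↥E := Finite.of_injective R hR
  have hEY : Nat.card ↥E ≤ Nat.card ↥Y := (Nat.card_le_card_of_injective R hR).trans hle
  have hbij : Function.Bijective F := hF.bijective_of_nat_card_le (hf ▸ hEY)
  have hsurj : ∀ μ : ↥(Z ⊔ Y) → ℂ, IsCharacter ↥(Z ⊔ Y) μ →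
      (∀ z : ↥Z, μ ⟨(z : U), SetLike.le_def.mp le_sup_left z.2⟩ = lam z) →
      ∃ u : U, conjChar hd u lamt = μ := by
    intro μ hμ hμZ
    obtain ⟨x, hx⟩ := hbij.2 ⟨μ, hμ, hμZ⟩
    exact ⟨x, congrArg Subtype.val hx⟩
  refine ⟨(Nat.card_eq_of_bijective F hbij).symm.trans hf, hperm, ?_,
    fun μ hμ hμZ => hsurj μ hμ.1 hμZ⟩
  intro μ₁ μ₂ h₁ h₁Z h₂ h₂Z
  obtain ⟨u₁, rfl⟩ := hsurj μ₁ h₁ h₁Z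
  obtain ⟨u₂, rfl⟩ := hsurj μ₂ h₂ h₂Z
  exact ⟨u₂ * u₁⁻¹, by rw [conjChar_conjChar, inv_mul_cancel_right]⟩
end
end

section
/- A subset N ⊆ Φ⁺ is a normal pattern if and only if N is an upper order ideal of the poset (Φ⁺, ≼), i.e., whenever β ∈ N and γ ∈ Φ⁺ satisfy β ≼ γ, then γ ∈ N. -/
/-!
Only the direction from normal patterns to order ideals has content. Let `c = b + ∑ vᵢ` with `b ∈ N`
and `c, vᵢ` positive roots. Since `⟪c, c⟫ > 0`, the root `c` has positive inner product with one of
the summands `b, vᵢ`, and a root minus a different root at an acute angle to it is again a root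
(`RSB.sub_mem_roots`). If the summand is some `vᵢ`, then `c - vᵢ` is `b` plus a shorter sum, hence a
positive root lying in `N` by induction, and normality adds `vᵢ` back. If it is `b`, then `c - b`
is a positive root and normality applies directly.

Positivity of these roots is detected by the height functional, which is `1` on the base
(`RSB.exists_height`): positive roots are exactly the roots of positive height.
-/

/-!
Combinatorics of closed patterns in the set of positive roots of a finite
reduced irreducible crystallographic root system with a fixed base, following
"On the characters of the Sylow p-subgroups of untwisted Chevalley groups".
-/

namespace RSP

variable {V : Type*} [AddCommGroup V]

/-- `S` is a closed pattern (relative to the ambient set `Φ` of positive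
roots): for all `a, b ∈ S` with `a + b ∈ Φ` one has `a + b ∈ S`. -/
def ClosedIn (Φ S : Set V) : Prop :=
  ∀ a ∈ S, ∀ b ∈ S, a + b ∈ Φ → a + b ∈ S

/-- `N` is a normal pattern in `Φ`: `N ⊆ Φ` and for all `a ∈ Φ`, `b ∈ N`
with `a + b ∈ Φ` one has `a + b ∈ N`. -/
def NormalPattern (Φ N : Set V) : Prop :=
  N ⊆ Φ ∧ ∀ a ∈ Φ, ∀ b ∈ N, a + b ∈ Φ → a + b ∈ N

/-- `N` is normal in `S` (relative to `Φ`): for all `a ∈ S`, `b ∈ N` with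
`a + b ∈ Φ` one has `a + b ∈ N`. -/
def NormalIn (Φ S N : Set V) : Prop :=
  ∀ a ∈ S, ∀ b ∈ N, a + b ∈ Φ → a + b ∈ N

/-- `rz(N) = {β ∈ Φ⁺ ∖ N : ∀ γ ∈ Φ⁺, β + γ ∉ Φ⁺ or β + γ ∈ N}`. -/
def rzSet (Φ N : Set V) : Set V :=
  {b | b ∈ Φ \ N ∧ ∀ c ∈ Φ, b + c ∉ Φ ∨ b + c ∈ N}

/-- `a ≺ b` iff `b - a` is a sum of one or more elements of `Φ`. -/
def prec (Φ : Set V) (a b : V) : Prop :=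
  ∃ m : Multiset V, m ≠ 0 ∧ (∀ v ∈ m, v ∈ Φ) ∧ b = a + m.sum

/-- `a ≼ b` iff `a ≺ b` or `a = b`. -/
def preceq (Φ : Set V) (a b : V) : Prop := prec Φ a b ∨ a = b

/-- The hook `h(a) = {γ ∈ Φ⁺ : a - γ ∈ Φ⁺ ∪ {0}}`. -/
def hook (Φ : Set V) (a : V) : Set V :=
  {c | c ∈ Φ ∧ (a - c ∈ Φ ∨ a - c = 0)}

/-- `n₀(a) = {a}` and `n_{i+1}(a) = {b + c : b ∈ n_i(a), c ∈ Φ⁺} ∩ Φ⁺`. -/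
def nIter (Φ : Set V) (a : V) : ℕ → Set V
  | 0 => {a}
  | i + 1 => {x | x ∈ Φ ∧ ∃ b ∈ nIter Φ a i, ∃ c ∈ Φ, x = b + c}

/-- `n(a) = ⋃_{i ≥ 1} n_i(a)`. -/
def nSet (Φ : Set V) (a : V) : Set V := ⋃ i : ℕ, nIter Φ a (i + 1)

/-- `k₀(a) = n(a)` and `k_{i+1}(a) = (rz(k_i(a)) ∖ {a}) ∪ k_i(a)`. -/
def kIter (Φ : Set V) (a : V) : ℕ → Set V
  | 0 => nSet Φ a
  | i + 1 => (rzSet Φ (kIter Φ a i) \ {a}) ∪ kIter Φ a i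

/-- `k(a) = ⋃_{i ≥ 0} k_i(a)`. -/
def kSet (Φ : Set V) (a : V) : Set V := ⋃ i : ℕ, kIter Φ a i

/-- `w₀(a) = {a}` and `w_{i+1}(a) = ⋃_{b ∈ w_i(a)} h(b)`. -/
def wIter (Φ : Set V) (a : V) : ℕ → Set V
  | 0 => {a}
  | i + 1 => ⋃ b ∈ wIter Φ a i, hook Φ b

/-- `w(a) = ⋃_{i ≥ 0} w_i(a)`. -/
def wSet (Φ : Set V) (a : V) : Set V := ⋃ i : ℕ, wIter Φ a i

/-- The closed pattern generated by `M`: the intersection of all closed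
patterns containing `M`. -/
def genPattern (Φ M : Set V) : Set V :=
  ⋂₀ {S : Set V | M ⊆ S ∧ S ⊆ Φ ∧ ClosedIn Φ S}

/-- The normal closure of `M` in a closed pattern `S`: the intersection of all
closed patterns `N` with `M ⊆ N ⊆ S` and `N ⊴ S`. -/
def normalClosure (Φ S M : Set V) : Set V :=
  ⋂₀ {N : Set V | M ⊆ N ∧ N ⊆ S ∧ ClosedIn Φ N ∧ NormalIn Φ S N}

end RSP

open scoped RealInnerProductSpace

/-- A finite reduced irreducible crystallographic root system `roots` in a real
inner product space, together with a base `base` (so that every root is a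
nonnegative or nonpositive integral combination of the base). -/
structure RSB (V : Type*) [NormedAddCommGroup V] [InnerProductSpace ℝ V] where
  roots : Set V
  base : Set V
  finite : roots.Finite
  zero_not_mem : (0 : V) ∉ roots
  span_top : Submodule.span ℝ roots = ⊤
  reduced : ∀ a ∈ roots, ∀ t : ℝ, t • a ∈ roots → t = 1 ∨ t = -1
  reflection_mem : ∀ a ∈ roots, ∀ b ∈ roots,
      b - (2 * ⟪b, a⟫ / ⟪a, a⟫) • a ∈ roots
  crystallographic : ∀ a ∈ roots, ∀ b ∈ roots,
      ∃ z : ℤ, 2 * ⟪b, a⟫ / ⟪a, a⟫ = (z : ℝ)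
  irreducible : ∀ A B : Set V, A ∪ B = roots → A.Nonempty → B.Nonempty →
      ∃ a ∈ A, ∃ b ∈ B, ⟪a, b⟫ ≠ 0
  base_subset : base ⊆ roots
  base_indep : LinearIndependent ℝ (fun x : ↥base => (x : V))
  base_decomp : ∀ a ∈ roots,
      (∃ c : V →₀ ℕ, ↑c.support ⊆ base ∧ a = c.sum fun v k => k • v) ∨
      (∃ c : V →₀ ℕ, ↑c.support ⊆ base ∧ a = -(c.sum fun v k => k • v))

/-- The set `Φ⁺` of positive roots (w.r.t. the base) of a root system. -/
def RSB.pos {V : Type*} [NormedAddCommGroup V] [InnerProductSpace ℝ V]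
    (R : RSB V) : Set V :=
  {a | a ∈ R.roots ∧ ∃ c : V →₀ ℕ, ↑c.support ⊆ R.base ∧ a = c.sum fun v k => k • v}

open RSP

namespace RSB

variable {V : Type*} [NormedAddCommGroup V] [InnerProductSpace ℝ V] (R : RSB V)

/-- There is a linear functional (the height) for which a root is positive iff its value there
is positive. -/
lemma exists_height : ∃ f : V →ₗ[ℝ] ℝ, ∀ a ∈ R.roots, a ∈ R.pos ↔ 0 < f a := by
  have hli : LinearIndepOn ℝ id R.base := R.base_indep
  let B := Module.Basis.extend hli
  let f : V →ₗ[ℝ] ℝ := B.constr ℝ (fun _ => (1 : ℝ))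
  have hf : ∀ v ∈ R.base, f v = 1 := by
    intro v hv
    have h := B.constr_basis ℝ (fun _ => (1 : ℝ)) ⟨v, hli.subset_extend _ hv⟩
    simpa [B] using h
  have hsum : ∀ c : V →₀ ℕ, ↑c.support ⊆ R.base →
      f (c.sum fun v k => k • v) = ∑ v ∈ c.support, (c v : ℝ) := by
    intro c hc
    rw [Finsupp.sum, map_sum]
    refine Finset.sum_congr rfl fun v hv => ?_
    rw [map_nsmul, hf v (hc hv)]
    simp
  refine ⟨f, fun a ha => ⟨?_, fun hfa => ?_⟩⟩
  · rintro ⟨-, c, hc, rfl⟩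
    rw [hsum c hc]
    have hne : c.support.Nonempty := by
      rw [Finsupp.support_nonempty_iff]
      rintro rfl
      exact R.zero_not_mem (by simpa using ha)
    refine Finset.sum_pos (fun v hv => ?_) hne
    exact_mod_cast Nat.pos_of_ne_zero (Finsupp.mem_support_iff.mp hv)
  · rcases R.base_decomp a ha with h | ⟨c, hc, rfl⟩
    · exact ⟨ha, h⟩
    · rw [map_neg, hsum c hc] at hfa
      have : (0 : ℝ) ≤ ∑ v ∈ c.support, (c v : ℝ) := Finset.sum_nonneg fun v _ => by positivity
      linarith

lemma inner_self_pos {a : V} (ha : a ∈ R.roots) : 0 < ⟪a, a⟫ :=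
  real_inner_self_pos.mpr fun h => R.zero_not_mem (h ▸ ha)

lemma neg_mem_roots {a : V} (ha : a ∈ R.roots) : -a ∈ R.roots := by
  have h := R.reflection_mem a ha a ha
  rw [mul_div_assoc, div_self (R.inner_self_pos ha).ne'] at h
  convert h using 1
  module

/-- Two positive Cartan integers that are both at least `2` force equality in the Cauchy–Schwarz
inequality, so distinct roots at an acute angle have one of these integers equal to `1`, and the
corresponding reflection yields the difference. -/
lemma sub_mem_roots {a b : V} (ha : a ∈ R.roots) (hb : b ∈ R.roots) (hab : 0 < ⟪a, b⟫)
    (hne : a ≠ b) : a - b ∈ R.roots := by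
  obtain ⟨m, hm⟩ := R.crystallographic b hb a ha
  obtain ⟨n, hn⟩ := R.crystallographic a ha b hb
  have haa := R.inner_self_pos ha
  have hbb := R.inner_self_pos hb
  have hba : ⟪b, a⟫ = ⟪a, b⟫ := real_inner_comm _ _
  have hm0 : 0 < m := by
    have : (0 : ℝ) < m := by rw [← hm]; positivity
    exact_mod_cast this
  have hn0 : 0 < n := by
    have : (0 : ℝ) < n := by rw [← hn, hba]; positivity
    exact_mod_cast this
  by_cases hm1 : m = 1
  · have h := R.reflection_mem b hb a ha
    rwa [hm, hm1, Int.cast_one, one_smul] at h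
  by_cases hn1 : n = 1
  · have h := R.neg_mem_roots (R.reflection_mem a ha b hb)
    rwa [hn, hn1, Int.cast_one, one_smul, neg_sub] at h
  exfalso
  have hm2 : (2 : ℝ) ≤ m := by exact_mod_cast (by omega : 2 ≤ m)
  have hn2 : (2 : ℝ) ≤ n := by exact_mod_cast (by omega : 2 ≤ n)
  rw [← hm, le_div_iff₀ hbb] at hm2
  rw [← hn, hba, le_div_iff₀ haa] at hn2
  -- Both squared norms are at most `⟪a, b⟫`, so `‖a - b‖ ^ 2 ≤ 0`.
  have h : ⟪a - b, a - b⟫ ≤ 0 := by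
    rw [inner_sub_left, inner_sub_right, inner_sub_right, hba]
    linarith
  exact h.not_gt (real_inner_self_pos.mpr (sub_ne_zero.mpr hne))

end RSB

/-- A subset `N ⊆ Φ⁺` is a normal pattern iff it is an upper
order ideal of the root poset `(Φ⁺, ≼)`. -/
theorem normalPattern_iff_upper_ideal
    (V : Type*) [NormedAddCommGroup V] [InnerProductSpace ℝ V]
    [FiniteDimensional ℝ V]
    (R : RSB V) (N : Set V) (hN : N ⊆ R.pos) :
    NormalPattern R.pos N ↔ ∀ b ∈ N, ∀ c ∈ R.pos, preceq R.pos b c → c ∈ N := by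
  constructor
  · rintro ⟨-, hnorm⟩
    obtain ⟨f, hf⟩ := R.exists_height
    have hfpos : ∀ a ∈ R.pos, 0 < f a := fun a ha => (hf a ha.1).mp ha
    have hfsum : ∀ t : Multiset V, (∀ w ∈ t, w ∈ R.pos) → 0 ≤ f t.sum := by
      intro t ht
      rw [map_multiset_sum]
      refine Multiset.sum_nonneg fun x hx => ?_
      obtain ⟨w, hw, rfl⟩ := Multiset.mem_map.mp hx
      exact (hfpos w (ht w hw)).le
    -- Induction on the number of summands of `c - b`.
    have key : ∀ n : ℕ, ∀ m : Multiset V, m.card = n → (∀ v ∈ m, v ∈ R.pos) →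
        ∀ b ∈ N, ∀ c ∈ R.pos, c = b + m.sum → c ∈ N := by
      intro n
      induction n with
      | zero =>
        intro m hm _ b hb c _ hc
        rw [Multiset.card_eq_zero.mp hm, Multiset.sum_zero, add_zero] at hc
        exact hc ▸ hb
      | succ n ih =>
        intro m hm hmpos b hb c hcpos hc
        by_cases hv : ∃ v ∈ m, 0 < ⟪c, v⟫
        · obtain ⟨v, hvm, hcv⟩ := hv
          obtain ⟨t, rfl⟩ := Multiset.exists_cons_of_mem hvm
          have htpos : ∀ w ∈ t, w ∈ R.pos := fun w hw => hmpos w (Multiset.mem_cons_of_mem hw)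
          have hvpos := hmpos v hvm
          have hdiff : c - v = b + t.sum := by
            rw [hc, Multiset.sum_cons]; abel
          have hft := hfsum t htpos
          have hfd : 0 < f (c - v) := by
            rw [hdiff, map_add]
            linarith [hfpos b (hN hb)]
          have hne : c ≠ v := by
            rintro rfl
            simp at hfd
          have hroot := R.sub_mem_roots hcpos.1 hvpos.1 hcv hne
          have hcN : c - v ∈ N := ih t (by simpa using hm) htpos b hb _
            ((hf _ hroot).mpr hfd) hdiff
          have h := hnorm v hvpos (c - v) hcN
          rw [add_sub_cancel] at h
          exact h hcpos
        · push Not at hv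
          have hms : ⟪c, m.sum⟫ ≤ 0 := by
            have h : ⟪c, m.sum⟫ = (m.map fun v => ⟪c, v⟫).sum :=
              map_multiset_sum (innerₛₗ ℝ c) m
            rw [h]
            refine (Multiset.sum_le_card_nsmul _ 0 fun x hx => ?_).trans_eq (smul_zero _)
            obtain ⟨w, hw, rfl⟩ := Multiset.mem_map.mp hx
            exact hv w hw
          have hcb : 0 < ⟪c, b⟫ := by
            have h : ⟪c, c⟫ = ⟪c, b⟫ + ⟪c, m.sum⟫ := by
              conv_lhs => rw [hc, inner_add_right, ← hc]
            linarith [R.inner_self_pos hcpos.1]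
          by_cases hne : c = b
          · exact hne ▸ hb
          have hroot := R.sub_mem_roots hcpos.1 (hN hb).1 hcb hne
          have hfd : 0 < f (c - b) := by
            obtain ⟨v, hvm⟩ := Multiset.card_pos_iff_exists_mem.mp (show 0 < m.card by omega)
            obtain ⟨t, rfl⟩ := Multiset.exists_cons_of_mem hvm
            rw [hc, add_sub_cancel_left, Multiset.sum_cons, map_add]
            exact add_pos_of_pos_of_nonneg (hfpos v (hmpos v (Multiset.mem_cons_self v t)))
              (hfsum t fun w hw => hmpos w (Multiset.mem_cons_of_mem hw))
          have h := hnorm (c - b) ((hf _ hroot).mpr hfd) b hb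
          rw [sub_add_cancel] at h
          exact h hcpos
    rintro b hb c hc (⟨m, -, hm, hcm⟩ | rfl)
    · exact key _ m rfl hm b hb c hc hcm
    · exact hb
  · intro h
    refine ⟨hN, fun a ha b hb hab => h b hb _ hab (Or.inl ⟨{a}, by simp, by simpa using ha, ?_⟩)⟩
    rw [Multiset.sum_singleton, add_comm]
end

section
/- For every α ∈ Φ⁺ one has w(α) = {β ∈ Φ⁺ : β ≼ α}. -/
open scoped RealInnerProductSpace

open RSP

section

variable {V : Type*} [NormedAddCommGroup V] [InnerProductSpace ℝ V]

lemma RSB.neg_mem (R : RSB V) {a : V} (ha : a ∈ R.roots) : -a ∈ R.roots := by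
  have h0 : ⟪a, a⟫ ≠ 0 := by
    rw [inner_self_ne_zero]
    rintro rfl
    exact R.zero_not_mem ha
  have h := R.reflection_mem a ha a ha
  rw [mul_div_assoc, div_self h0] at h
  convert h using 1
  module

/-- Two roots at an acute angle differ by a root or by zero: if one of the two Cartan integers is
`1`, a reflection produces the difference up to sign. -/
lemma RSB.sub_mem (R : RSB V) {a b : V} (ha : a ∈ R.roots) (hb : b ∈ R.roots)
    (hab : 0 < ⟪a, b⟫) : a - b ∈ R.roots ∨ a - b = 0 := by
  have pos : ∀ x ∈ R.roots, 0 < ⟪x, x⟫ := fun x hx =>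
    real_inner_self_pos.mpr fun h => R.zero_not_mem (h ▸ hx)
  have haa := pos a ha
  have hbb := pos b hb
  obtain ⟨p, hp⟩ := R.crystallographic b hb a ha
  obtain ⟨q, hq⟩ := R.crystallographic a ha b hb
  have hba : ⟪b, a⟫ = ⟪a, b⟫ := real_inner_comm _ _
  have rp := R.reflection_mem b hb a ha
  have rq := R.reflection_mem a ha b hb
  rw [hp] at rp
  rw [hq] at rq
  rw [hba] at hq
  have p0 : 0 < p := by
    have : (0 : ℝ) < p := by rw [← hp]; positivity
    exact_mod_cast this
  have q0 : 0 < q := by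
    have : (0 : ℝ) < q := by rw [← hq]; positivity
    exact_mod_cast this
  rcases (show p = 1 ∨ 2 ≤ p by lia) with rfl | p2
  · left
    simpa using rp
  rcases (show q = 1 ∨ 2 ≤ q by lia) with rfl | q2
  · left
    simpa using R.neg_mem rq
  -- Both Cartan integers are at least `2`, which forces `‖a - b‖² ≤ 0`.
  right
  have p2' : (2 : ℝ) ≤ p := by exact_mod_cast p2
  have q2' : (2 : ℝ) ≤ q := by exact_mod_cast q2
  rw [← hp, le_div_iff₀ hbb] at p2'
  rw [← hq, le_div_iff₀ haa] at q2'
  have h : ⟪a - b, a - b⟫ = ⟪a, a⟫ - 2 * ⟪a, b⟫ + ⟪b, b⟫ := by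
    rw [real_inner_sub_sub_self]
  have h' : ⟪a - b, a - b⟫ ≤ 0 := by linarith
  exact inner_self_eq_zero.mp (h'.antisymm real_inner_self_nonneg)

/-- Some linear form is positive on all positive roots: extend the base to a basis of `V` and
take the form with value `1` on that basis, which restricts to the height on roots. -/
lemma RSB.exists_height_s7 (R : RSB V) : ∃ f : V →ₗ[ℝ] ℝ, ∀ v ∈ R.pos, 0 < f v := by
  have hli : LinearIndepOn ℝ id R.base := R.base_indep
  let B := Module.Basis.extend hli
  have hB : ∀ v ∈ R.base, B.constr ℝ (fun _ => (1 : ℝ)) v = 1 := by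
    intro v hv
    have h := B.constr_basis ℝ (fun _ => (1 : ℝ)) ⟨v, hli.subset_extend _ hv⟩
    simpa [B] using h
  refine ⟨B.constr ℝ (fun _ => (1 : ℝ)), ?_⟩
  rintro v ⟨hv, c, hc, rfl⟩
  have hne : c.support.Nonempty := by
    rw [Finsupp.support_nonempty_iff]
    rintro rfl
    exact R.zero_not_mem (by simpa using hv)
  rw [Finsupp.sum, map_sum]
  refine Finset.sum_pos (fun x hx => ?_) hne
  rw [map_nsmul, hB x (hc hx)]
  have : 0 < c x := Nat.pos_of_ne_zero (Finsupp.mem_support_iff.mp hx)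
  simpa using this

lemma RSB.pos_add (R : RSB V) {a b : V} (ha : a ∈ R.pos) (hb : b ∈ R.pos)
    (h : a + b ∈ R.roots) : a + b ∈ R.pos := by
  classical
  obtain ⟨-, c, hc, rfl⟩ := ha
  obtain ⟨-, d, hd, rfl⟩ := hb
  refine ⟨h, c + d, fun x hx => ?_, ?_⟩
  · rcases Finset.mem_union.mp (Finsupp.support_add hx) with h | h
    · exact hc h
    · exact hd h
  · rw [Finsupp.sum_add_index'] <;> simp [add_smul]

/-- A root at which such a linear form is positive is a positive root. -/
lemma RSB.pos_of_height (R : RSB V) {f : V →ₗ[ℝ] ℝ} (hf : ∀ v ∈ R.pos, 0 < f v) {a : V}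
    (ha : a ∈ R.roots) (h : 0 < f a) : a ∈ R.pos := by
  rcases R.base_decomp a ha with hc | ⟨c, hc, hac⟩
  · exact ⟨ha, hc⟩
  · have := hf (-a) ⟨R.neg_mem ha, c, hc, by rw [hac, neg_neg]⟩
    rw [map_neg] at this
    linarith

lemma mem_wSet_self {W : Type*} [AddCommGroup W] {Φ : Set W} (a : W) : a ∈ wSet Φ a :=
  Set.mem_iUnion.mpr ⟨0, rfl⟩

lemma mem_wSet_of_hook {W : Type*} [AddCommGroup W] {Φ : Set W} {a b c : W}
    (hb : b ∈ wSet Φ a) (hc : c ∈ hook Φ b) : c ∈ wSet Φ a := by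
  obtain ⟨i, hi⟩ := Set.mem_iUnion.mp hb
  exact Set.mem_iUnion.mpr ⟨i + 1, Set.mem_biUnion hi hc⟩

lemma wSet_trans {W : Type*} [AddCommGroup W] {Φ : Set W} {a b c : W}
    (hb : b ∈ wSet Φ a) (hc : c ∈ wSet Φ b) : c ∈ wSet Φ a := by
  obtain ⟨i, hi⟩ := Set.mem_iUnion.mp hc
  induction i generalizing c with
  | zero => exact (show c = b from hi) ▸ hb
  | succ i ih =>
    obtain ⟨d, hd, hcd⟩ := Set.mem_iUnion₂.mp hi
    exact mem_wSet_of_hook (ih (Set.mem_iUnion.mpr ⟨i, hd⟩) hd) hcd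

lemma sum_height_nonneg {Φ : Set V} {f : V →ₗ[ℝ] ℝ} (hf : ∀ v ∈ Φ, 0 < f v)
    (m : Multiset V) (hm : ∀ v ∈ m, v ∈ Φ) : 0 ≤ f m.sum := by
  rw [map_multiset_sum]
  refine Multiset.sum_nonneg fun x hx => ?_
  obtain ⟨v, hv, rfl⟩ := Multiset.mem_map.mp hx
  exact (hf v (hm v hv)).le

lemma exists_inner_pos (x : V) (m : Multiset V) (h : 0 < ⟪x, m.sum⟫) :
    ∃ c ∈ m, 0 < ⟪x, c⟫ := by
  by_contra! hc
  induction m using Multiset.induction with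
  | empty => simp at h
  | cons c m ih =>
    rw [Multiset.sum_cons, inner_add_right] at h
    have h1 := hc c (Multiset.mem_cons_self c m)
    exact ih (by linarith) fun d hd => hc d (Multiset.mem_cons_of_mem hd)

/-- The converse inclusion, by induction on the number `n` of positive roots whose sum is
`a - b`. -/
lemma RSB.mem_wSet (R : RSB V) (n : ℕ) : ∀ (a b : V) (m : Multiset V), a ∈ R.pos → b ∈ R.pos →
    m.card = n → (∀ v ∈ m, v ∈ R.pos) → a = b + m.sum → b ∈ wSet R.pos a := by
  obtain ⟨f, hf⟩ := R.exists_height_s7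
  induction n with
  | zero =>
    intro a b m ha hb hn hm hab
    rw [Multiset.card_eq_zero.mp hn, Multiset.sum_zero, add_zero] at hab
    exact hab ▸ mem_wSet_self a
  | succ n ih =>
    intro a b m ha hb hn hm hab
    have hsum : m.sum ≠ 0 := by
      obtain ⟨c, hc⟩ := Multiset.card_pos_iff_exists_mem.mp (by lia : 0 < m.card)
      obtain ⟨m', rfl⟩ := Multiset.exists_cons_of_mem hc
      intro h0
      have h1 := hf c (hm c hc)
      have h2 := sum_height_nonneg hf m' fun v hv => hm v (Multiset.mem_cons_of_mem hv)
      have h3 := congrArg f h0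
      rw [Multiset.sum_cons, map_add, map_zero] at h3
      linarith
    obtain ⟨c, hc, hpos⟩ := exists_inner_pos m.sum m (real_inner_self_pos.mpr hsum)
    obtain ⟨m, rfl⟩ := Multiset.exists_cons_of_mem hc
    have hcp := hm c hc
    have hm' : ∀ v ∈ m, v ∈ R.pos := fun v hv => hm v (Multiset.mem_cons_of_mem hv)
    have hn' : m.card = n := by simpa using hn
    have hmf := sum_height_nonneg hf m hm'
    have hbf := hf b hb
    have hcf := hf c hcp
    rw [show (c ::ₘ m).sum = a - b by rw [hab]; abel, inner_sub_left] at hpos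
    rw [Multiset.sum_cons] at hab
    -- Remove `c` from the sum by lowering `a` to `a - c`, or else by raising `b` to `b + c`.
    rcases lt_or_ge 0 ⟪a, c⟫ with hac | hac
    · have hd : a - c = b + m.sum := by rw [hab]; abel
      have hdf : 0 < f (a - c) := by rw [hd, map_add]; linarith
      rcases R.sub_mem ha.1 hcp.1 hac with hr | h0
      · have hp := R.pos_of_height hf hr hdf
        refine wSet_trans (mem_wSet_of_hook (mem_wSet_self a) ⟨hp, Or.inl ?_⟩)
          (ih (a - c) b m hp hb hn' hm' hd)
        rwa [sub_sub_cancel]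
      · rw [h0, map_zero] at hdf
        exact absurd hdf (lt_irrefl 0)
    · have hbc : 0 < ⟪b, -c⟫ := by rw [inner_neg_right]; linarith
      rcases R.sub_mem hb.1 (R.neg_mem hcp.1) hbc with hr | h0
      · rw [sub_neg_eq_add] at hr
        have hp := R.pos_add hb hcp hr
        refine mem_wSet_of_hook (ih a (b + c) m ha hp hn' hm' (by rw [hab]; abel))
          ⟨hb, Or.inl ?_⟩
        rwa [add_sub_cancel_left]
      · have h1 := congrArg f h0
        rw [sub_neg_eq_add, map_add, map_zero] at h1
        linarith

lemma preceq_of_hook {W : Type*} [AddCommGroup W] {Φ : Set W} {a b c : W}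
    (hb : preceq Φ b a) (hc : c ∈ hook Φ b) : preceq Φ c a := by
  obtain ⟨-, hd | h0⟩ := hc
  · left
    rcases hb with ⟨m, -, hm, rfl⟩ | rfl
    · refine ⟨(b - c) ::ₘ m, Multiset.cons_ne_zero, ?_, ?_⟩
      · intro v hv
        rcases Multiset.mem_cons.mp hv with rfl | hv
        · exact hd
        · exact hm v hv
      · rw [Multiset.sum_cons]; abel
    · exact ⟨{b - c}, Multiset.singleton_ne_zero _, by simpa using hd, by simp⟩
  · rwa [← sub_eq_zero.mp h0]

end

/-- For every positive root `α` one has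
`w(α) = {β ∈ Φ⁺ : β ≼ α}`. -/
theorem wSet_eq_lowerSet
    (V : Type*) [NormedAddCommGroup V] [InnerProductSpace ℝ V]
    [FiniteDimensional ℝ V]
    (R : RSB V) (a : V) (ha : a ∈ R.pos) :
    wSet R.pos a = {b | b ∈ R.pos ∧ preceq R.pos b a} := by
  ext b
  constructor
  · intro hb
    obtain ⟨i, hi⟩ := Set.mem_iUnion.mp hb
    clear hb
    induction i generalizing b with
    | zero => exact ⟨(show b = a from hi) ▸ ha, Or.inr hi⟩
    | succ i ih =>
      obtain ⟨d, hd, hbd⟩ := Set.mem_iUnion₂.mp hi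
      exact ⟨hbd.1, preceq_of_hook (ih d hd).2 hbd⟩
  · rintro ⟨hb, ⟨m, -, hm, hab⟩ | rfl⟩
    · exact R.mem_wSet _ a b m ha hb rfl hm hab
    · exact mem_wSet_self b
end
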